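/- arXiv:1706.06578 — 3 statements merged into one kernel-verified Lean document; each statement's English description precedes it below -/
import Mathlib

section
/- Let q = p^h > 4 with p prime, h ≥ 1, and let V be a quasi-Hermitian variety of PG(3,q^2) whose characteristic vector v^V belongs to C_p. If π is a plane of PG(3,q^2) with |π ∩ V| = q^3 + q^2 + 1, then every line of π meets π ∩ V in either 1, q+1, or q^2+1 points. -/
/-!
Common framework: `ProjPoint F n` is the set of points of the projective space
PG(n-1, |F|) (so PG(r, q²) corresponds to `n = r + 1` and `Fintype.card F = q ^ 2`).
Projective subspaces of projective dimension `k` are the submodules of `Fin n → F`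
of `finrank` equal to `k + 1`; lines have finrank 2, planes finrank 3 and
hyperplanes finrank `n - 1 = r`.
-/

open Module Matrix

/-- The points of the projective space PG(n-1, |F|): one-dimensional subspaces
of `F^n`. -/
def ProjPoint (F : Type) [Field F] (n : ℕ) : Type :=
  {W : Submodule F (Fin n → F) // finrank F W = 1}

/-- The set of projective points lying in a given subspace `W`. -/
def pointsIn (F : Type) [Field F] (n : ℕ) (W : Submodule F (Fin n → F)) :
    Set (ProjPoint F n) :=
  {P | P.1 ≤ W}

/-- The number of points of `V` lying in the subspace `W`. -/
noncomputable def secant (F : Type) [Field F] (n : ℕ) (V : Set (ProjPoint F n))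
    (W : Submodule F (Fin n → F)) : ℕ :=
  (V ∩ pointsIn F n W).ncard

/-- The characteristic vector of a set of projective points, with values in `F_p`. -/
noncomputable def charVec (F : Type) [Field F] (p n : ℕ) (S : Set (ProjPoint F n)) :
    ProjPoint F n → ZMod p :=
  Set.indicator S 1

/-- `C_p`: the `F_p`-code spanned by the characteristic vectors of hyperplanes. -/
def hypCode (F : Type) [Field F] (p n : ℕ) :
    Submodule (ZMod p) (ProjPoint F n → ZMod p) :=
  Submodule.span (ZMod p)
    {v | ∃ H : Submodule F (Fin n → F), finrank F H = n - 1 ∧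
      v = charVec F p n (pointsIn F n H)}

/-- A quasi-Hermitian variety of PG(r, q²): it has the size of a non-singular
Hermitian variety and the same two intersection numbers with hyperplanes.
(All identities are stated multiplied through by `q² - 1`.) -/
def IsQuasiHermitian (F : Type) [Field F] (q r : ℕ)
    (V : Set (ProjPoint F (r + 1))) : Prop :=
  (V.ncard : ℤ) * ((q : ℤ) ^ 2 - 1)
      = ((q : ℤ) ^ (r + 1) + (-1) ^ r) * ((q : ℤ) ^ r - (-1) ^ r) ∧
  ∀ H : Submodule F (Fin (r + 1) → F), finrank F H = r →
    ((secant F (r + 1) V H : ℤ) * ((q : ℤ) ^ 2 - 1)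
        = ((q : ℤ) ^ r + (-1) ^ (r - 1)) * ((q : ℤ) ^ (r - 1) - (-1) ^ (r - 1)) ∨
     (secant F (r + 1) V H : ℤ) * ((q : ℤ) ^ 2 - 1)
        = ((q : ℤ) ^ 2 - 1)
          + (q : ℤ) ^ 2 * (((q : ℤ) ^ (r - 1) + (-1) ^ r) * ((q : ℤ) ^ (r - 2) - (-1) ^ r)))

/-- The zero set, in PG(n-1,|F|), of the Hermitian form `x ↦ xᵀ A x^(q)`. -/
def hermSet (F : Type) [Field F] (q n : ℕ) (A : Matrix (Fin n) (Fin n) F) :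
    Set (ProjPoint F n) :=
  {P | ∀ x ∈ P.1, ∑ i, ∑ j, x i * A i j * (x j) ^ q = 0}

/-- A non-singular Hermitian variety of PG(n-1, q²). -/
def IsNonsingHermitian (F : Type) [Field F] (q n : ℕ)
    (V : Set (ProjPoint F n)) : Prop :=
  ∃ A : Matrix (Fin n) (Fin n) F, IsUnit A.det ∧
    Aᵀ = A.map (fun a => a ^ q) ∧ V = hermSet F q n A

/-- A singular Hermitian variety of PG(n-1, q²) whose singular space (the radical
of the Hermitian form) has projective dimension `d`. -/
def IsSingularHermitian (F : Type) [Field F] (q n d : ℕ)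
    (S : Set (ProjPoint F n)) : Prop :=
  ∃ A : Matrix (Fin n) (Fin n) F,
    Aᵀ = A.map (fun a => a ^ q) ∧
    finrank F (LinearMap.ker (Matrix.toLin' Aᵀ)) = d + 1 ∧
    S = hermSet F q n A

/-- A `d`-singular quasi-Hermitian variety of PG(r, q²). -/
def IsSingularQuasiHermitian (F : Type) [Field F] (q r d : ℕ)
    (S : Set (ProjPoint F (r + 1))) : Prop :=
  ∃ S₀ : Set (ProjPoint F (r + 1)), IsSingularHermitian F q (r + 1) d S₀ ∧
    S.ncard = S₀.ncard ∧
    ∀ H : Submodule F (Fin (r + 1) → F), finrank F H = r →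
      ∃ H₀ : Submodule F (Fin (r + 1) → F), finrank F H₀ = r ∧
        secant F (r + 1) S H = secant F (r + 1) S₀ H₀

/-- `U` is a classical unital (Hermitian curve) of the plane `π` of PG(n-1, q²):
in some coordinatization `e` of `π`, it is the zero set of a non-degenerate
Hermitian form on `F³`. -/
def IsClassicalUnital (F : Type) [Field F] (q n : ℕ)
    (π : Submodule F (Fin n → F)) (U : Set (ProjPoint F n)) : Prop :=
  ∃ e : (Fin 3 → F) →ₗ[F] (Fin n → F), LinearMap.ker e = ⊥ ∧ LinearMap.range e = π ∧
    ∃ A : Matrix (Fin 3) (Fin 3) F, IsUnit A.det ∧ Aᵀ = A.map (fun a => a ^ q) ∧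
      U = {P | ∃ y : Fin 3 → F, y ≠ 0 ∧ P.1 = Submodule.span F {e y} ∧
        ∑ i, ∑ j, y i * A i j * (y j) ^ q = 0}

open Polynomial in
lemma det_mult {F : Type} [Field F] (s : ℕ) (M : Matrix (Fin s) (Fin s) F[X])
    (A : Finset F) (y : F) (hA : A.card ≤ s)
    (hM : ∀ i j, (M i j).eval y = ∑ x ∈ A, x ^ (i.val + j.val)) :
    (X - C y) ^ (s - A.card) ∣ M.det := by
  classical
  set f : F[X] := ∏ a ∈ A, (X - C a) with hf
  have hfm : f.Monic := monic_prod_of_monic _ _ (fun a _ => monic_X_sub_C a)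
  have hfd : f.natDegree = A.card := by
    rw [hf, natDegree_prod_of_monic _ _ (fun a _ => monic_X_sub_C a)]; simp
  let P : Fin s → F[X] := fun t => if t.val < A.card then X ^ t.val else X ^ (t.val - A.card) * f
  have hPm : ∀ t, (P t).Monic := by
    intro t
    simp only [P]; split_ifs
    · exact monic_X_pow _
    · exact (monic_X_pow _).mul hfm
  have hPd : ∀ t, (P t).natDegree = t.val := by
    intro t
    simp only [P]; split_ifs with h
    · simp
    · rw [(monic_X_pow _).natDegree_mul hfm, hfd, natDegree_X_pow]; omega
  have hU := Matrix.det_matrixOfPolynomials P hPd hPm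
  set U : Matrix (Fin s) (Fin s) F := Matrix.of (fun i j => (P j).coeff i) with hUdef
  let N : Matrix (Fin s) (Fin s) F[X] := M * U.map C
  have hN : N.det = M.det := by
    have : (U.map C).det = C U.det := by
      rw [RingHom.map_det]; rfl
    rw [Matrix.det_mul, this, hU]; simp
  have hev : ∀ i j, ¬ (j.val < A.card) → (X - C y) ∣ N i j := by
    intro i j hj
    rw [dvd_iff_isRoot, IsRoot.def]
    simp only [N, Matrix.mul_apply, eval_finsetSum, eval_mul, Matrix.map_apply, eval_C, hM]
    simp only [Finset.sum_mul, hUdef, Matrix.of_apply]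
    rw [Finset.sum_comm]
    apply Finset.sum_eq_zero
    intro x hx
    have h1 : (P j).eval x = 0 := by
      simp only [P, if_neg hj, eval_mul, hf, eval_prod]
      rw [Finset.prod_eq_zero hx (by simp), mul_zero]
    have h2 : (P j).eval x = ∑ i : Fin s, (P j).coeff i * x ^ i.val := by
      rw [eval_eq_sum_range' (n := s) (by rw [hPd]; exact j.2), Finset.sum_range]
    calc _ = x ^ i.val * ∑ i : Fin s, (P j).coeff i * x ^ i.val := by
          rw [Finset.mul_sum]; apply Finset.sum_congr rfl; intro k _; ring
      _ = 0 := by rw [← h2, h1, mul_zero]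
  let d : Fin s → F[X] := fun j => if j.val < A.card then 1 else X - C y
  have hdv : ∀ i j, d j ∣ N i j := by
    intro i j
    simp only [d]; split_ifs with h
    · exact one_dvd _
    · exact hev i j h
  choose K hK using hdv
  have hNK : N = (Matrix.of K) * Matrix.diagonal d := by
    ext1 i j
    rw [Matrix.mul_diagonal, Matrix.of_apply, hK, mul_comm]
  rw [← hN, hNK, Matrix.det_mul, Matrix.det_diagonal]
  apply Dvd.dvd.mul_left
  simp only [d]
  rw [Finset.prod_ite]
  simp only [Finset.prod_const, one_pow, one_mul]
  apply pow_dvd_pow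
  have := Finset.card_filter_add_card_filter_not (s := (Finset.univ : Finset (Fin s))) (fun j => j.val < A.card)
  have h2 : (Finset.univ.filter (fun j : Fin s => j.val < A.card)).card ≤ A.card := by
    rw [← Finset.card_range A.card]
    apply Finset.card_le_card_of_injOn (fun j => j.val)
    · intro j hj; simpa using hj
    · intro a _ b _ h; exact Fin.ext h
  simp at this
  simp only [not_lt] at *
  omega

open Polynomial in
lemma hankel_ineq {F : Type} [Field F] [Fintype F] (A : F → Finset F)
    (hA : ∀ k : ℕ, ∃ P : F[X], P.natDegree ≤ k ∧ ∀ y, P.eval y = ∑ x ∈ A y, x ^ k) (y0 : F) :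
    ∑ y, ((A y0).card - (A y).card) ≤ (A y0).card * ((A y0).card - 1) := by
  classical
  choose P hPd hPe using hA
  set s := (A y0).card with hs
  let M : Matrix (Fin s) (Fin s) F[X] := Matrix.of fun i j => P (i.val + j.val)
  have hdet0 : M.det.eval y0 ≠ 0 := by
    let v : Fin s → F := fun i => (((A y0).equivFin).symm i : F)
    have hv : Function.Injective v := by
      intro a b h
      exact (A y0).equivFin.symm.injective (Subtype.ext h)
    have : M.map (eval y0) = (Matrix.vandermonde v)ᵀ * Matrix.vandermonde v := by
      ext i j
      simp only [M, Matrix.map_apply, Matrix.of_apply, hPe, Matrix.mul_apply, Matrix.transpose_apply,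
        Matrix.vandermonde_apply, ← pow_add]
      rw [← Finset.sum_coe_sort (A y0)]
      exact (Equiv.sum_comp (A y0).equivFin.symm (fun x => (x : F) ^ (i.val + j.val))).symm
    have h2 : M.det.eval y0 = (M.map (eval y0)).det := by
      have := RingHom.map_det (evalRingHom y0) M
      simpa using this
    rw [h2, this, Matrix.det_mul, Matrix.det_transpose]
    have := Matrix.det_vandermonde_ne_zero_iff.mpr hv
    exact mul_ne_zero this this
  have hne : M.det ≠ 0 := by
    intro h; rw [h] at hdet0; simp at hdet0
  have hdeg : M.det.natDegree ≤ s * (s - 1) := by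
    rw [Matrix.det_apply]
    apply natDegree_sum_le_of_forall_le
    intro σ _
    have h1 : (∏ i, M (σ i) i).natDegree ≤ s * (s - 1) := by
      refine (natDegree_prod_le _ _).trans ?_
      calc ∑ i, (M (σ i) i).natDegree ≤ ∑ i : Fin s, ((σ i).val + i.val) :=
            Finset.sum_le_sum (fun i _ => hPd _)
        _ = s * (s - 1) := by
            rw [Finset.sum_add_distrib, Equiv.sum_comp σ (fun i : Fin s => i.val)]
            have : ∑ i : Fin s, i.val = ∑ i ∈ Finset.range s, i := (Finset.sum_range (fun i => i)).symm
            rw [this, ← mul_two, Finset.sum_range_id_mul_two]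
    refine le_trans ?_ h1
    rcases Int.units_eq_one_or (Equiv.Perm.sign σ) with h | h <;> rw [h] <;> simp
  have hdvd : ∏ y, (X - C y) ^ (s - (A y).card) ∣ M.det := by
    apply Finset.prod_dvd_of_coprime
    · intro a _ b _ hab
      exact (isCoprime_X_sub_C_of_isUnit_sub (sub_ne_zero.mpr hab).isUnit).pow
    · intro y _
      by_cases h : (A y).card ≤ s
      · exact det_mult s M (A y) y h (fun i j => hPe _ _)
      · rw [Nat.sub_eq_zero_of_le (by omega)]; simp
  have := natDegree_le_of_dvd hdvd hne
  rw [natDegree_prod_of_monic _ _ (fun y _ => (monic_X_sub_C y).pow _)] at this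
  simp at this
  exact this.trans hdeg

noncomputable instance instFintypeProjPoint (F : Type) [Field F] [Fintype F] (n : ℕ) :
    Fintype (ProjPoint F n) :=
  haveI : Finite (ProjPoint F n) := by unfold ProjPoint; infer_instance
  Fintype.ofFinite _

noncomputable instance instDecEqProjPoint (F : Type) [Field F] (n : ℕ) :
    DecidableEq (ProjPoint F n) := Classical.decEq _

/-- The point spanned by a nonzero vector. -/
noncomputable def pt {F : Type} [Field F] {n : ℕ} (v : Fin n → F) (hv : v ≠ 0) : ProjPoint F n :=
  ⟨Submodule.span F {v}, finrank_span_singleton hv⟩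

lemma pt_le {F : Type} [Field F] {n : ℕ} (v : Fin n → F) (hv : v ≠ 0)
    (W : Submodule F (Fin n → F)) : (pt v hv).1 ≤ W ↔ v ∈ W := by
  simp [pt, Submodule.span_singleton_le_iff_mem]

lemma exists_pt {F : Type} [Field F] {n : ℕ} (P : ProjPoint F n) :
    ∃ v, ∃ hv : v ≠ 0, P = pt v hv := by
  obtain ⟨v, hv, h⟩ := finrank_eq_one_iff'.mp P.2
  refine ⟨v.1, by simpa using hv, ?_⟩
  apply Subtype.ext
  apply le_antisymm
  · intro w hw
    obtain ⟨c, hc⟩ := h ⟨w, hw⟩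
    have : c • v.1 = w := congrArg Subtype.val hc
    simp only [pt, Submodule.mem_span_singleton]
    exact ⟨c, this⟩
  · rw [pt_le]; exact v.2

open Classical in
lemma card_pointsIn {F : Type} [Field F] [Fintype F] {n : ℕ} (W : Submodule F (Fin n → F)) :
    (Finset.univ.filter (fun P : ProjPoint F n => P.1 ≤ W)).card
      = ∑ i ∈ Finset.range (finrank F W), Fintype.card F ^ i := by
  have h1 := Projectivization.card_of_finrank F W (n := finrank F W) rfl
  rw [Nat.card_eq_fintype_card (α := F)] at h1
  rw [← h1, ← Fintype.card_subtype, ← Nat.card_eq_fintype_card]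
  refine Nat.card_congr (Equiv.symm ?_)
  refine (Projectivization.equivSubmodule F W).trans ?_
  refine ⟨fun H => ⟨⟨H.1.map W.subtype, ?_⟩, Submodule.map_subtype_le _ _⟩,
    fun P => ⟨P.1.1.comap W.subtype, ?_⟩, ?_, ?_⟩
  · exact (LinearEquiv.finrank_eq
      (Submodule.equivMapOfInjective W.subtype W.injective_subtype H.1)).symm.trans H.2
  · have h2 := LinearEquiv.finrank_eq (Submodule.comapSubtypeEquivOfLe P.2)
    rw [h2, P.1.2]
  · intro H
    apply Subtype.ext
    exact Submodule.comap_map_eq_of_injective W.injective_subtype H.1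
  · intro P
    apply Subtype.ext
    apply Subtype.ext
    simp only [Submodule.map_comap_subtype]
    exact inf_eq_right.mpr P.2

open Classical in
lemma secant_eq {F : Type} [Field F] [Fintype F] {n : ℕ} (V : Set (ProjPoint F n))
    (W : Submodule F (Fin n → F)) :
    secant F n V W = (Finset.univ.filter (fun P : ProjPoint F n => P ∈ V ∧ P.1 ≤ W)).card := by
  unfold secant
  rw [← Set.ncard_coe_finset]
  congr 1
  ext P
  simp [pointsIn]

open Classical in
lemma sum_const {F : Type} [Field F] [Fintype F] {n p : ℕ} (hcard : (Fintype.card F : ZMod p) = 0)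
    (hn : 1 ≤ n) (c : ProjPoint F n → ZMod p) (hc : c ∈ hypCode F p n) :
    ∃ σ : ZMod p, ∀ W : Submodule F (Fin n → F), 2 ≤ finrank F W →
      ∑ P ∈ Finset.univ.filter (fun P : ProjPoint F n => P.1 ≤ W), c P = σ := by
  unfold hypCode at hc
  induction hc using Submodule.span_induction with
  | mem v hv =>
    obtain ⟨H, hH, rfl⟩ := hv
    refine ⟨1, fun W hW => ?_⟩
    have h0 : ∑ P ∈ Finset.univ.filter (fun P : ProjPoint F n => P.1 ≤ W),
        charVec F p n (pointsIn F n H) P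
        = ((Finset.univ.filter (fun P : ProjPoint F n => P.1 ≤ W ⊓ H)).card : ZMod p) := by
      simp only [charVec, Set.indicator_apply, pointsIn, Set.mem_ofPred_eq, Pi.one_apply]
      rw [Finset.sum_ite]
      simp [Finset.filter_filter, le_inf_iff]
    rw [h0, card_pointsIn]
    have h1 := Submodule.finrank_sup_add_finrank_inf_eq W H
    have h2 := Submodule.finrank_le (W ⊔ H)
    simp only [Module.finrank_fin_fun] at h2
    obtain ⟨r, hr⟩ : ∃ r, finrank F ↥(W ⊓ H) = r + 1 := ⟨finrank F ↥(W ⊓ H) - 1, by omega⟩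
    rw [hr, Finset.sum_range_succ']
    push_cast
    rw [hcard]
    simp
  | zero => exact ⟨0, fun W hW => by simp⟩
  | add x y _ _ hx hy =>
    obtain ⟨a, ha⟩ := hx
    obtain ⟨b, hb⟩ := hy
    refine ⟨a + b, fun W hW => ?_⟩
    simp only [Pi.add_apply, Finset.sum_add_distrib, ha W hW, hb W hW]
  | smul r x _ hx =>
    obtain ⟨a, ha⟩ := hx
    refine ⟨r * a, fun W hW => ?_⟩
    simp only [Pi.smul_apply, smul_eq_mul, ← Finset.mul_sum, ha W hW]

open Classical in
lemma secant_cast {F : Type} [Field F] [Fintype F] {n p : ℕ} (V : Set (ProjPoint F n))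
    (W : Submodule F (Fin n → F)) :
    ∑ P ∈ Finset.univ.filter (fun P : ProjPoint F n => P.1 ≤ W), charVec F p n V P
      = (secant F n V W : ZMod p) := by
  rw [secant_eq]
  simp only [charVec, Set.indicator_apply, Pi.one_apply]
  rw [Finset.sum_ite]
  simp [Finset.filter_filter, and_comm]

open Polynomial Classical in
lemma power_poly {F : Type} [Field F] [Fintype F] {p : ℕ} [CharP F p]
    (c : ProjPoint F 4 → ZMod p) (hc : c ∈ hypCode F p 4) (e1 e2 e3 : Fin 4 → F)
    (hne : ∀ x y : F, x • e1 + e2 + y • e3 ≠ 0) (k : ℕ) (hk : k < Fintype.card F - 1) :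
    ∃ P : F[X], P.natDegree ≤ k ∧ ∀ y, P.eval y =
      ∑ x : F, ZMod.castHom (dvd_refl p) F (c (pt (x • e1 + e2 + y • e3) (hne x y))) * x ^ k := by
  unfold hypCode at hc
  induction hc using Submodule.span_induction with
  | mem v hv =>
    obtain ⟨H, hH, rfl⟩ := hv
    have hlt : H < ⊤ := by
      rw [lt_top_iff_ne_top]
      rintro rfl
      rw [finrank_top, Module.finrank_fin_fun] at hH
      omega
    obtain ⟨φ, hφ0, hφ⟩ := Submodule.exists_le_ker_of_lt_top H hlt
    have hker : H = LinearMap.ker φ := by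
      apply Submodule.eq_of_le_of_finrank_le hφ
      have : LinearMap.ker φ ≠ ⊤ := by
        intro h; exact hφ0 (LinearMap.ker_eq_top.mp h)
      have := Submodule.finrank_lt this
      rw [Module.finrank_fin_fun] at this
      omega
    have hval : ∀ x y : F, ZMod.castHom (dvd_refl p) F
        (charVec F p 4 (pointsIn F 4 H) (pt (x • e1 + e2 + y • e3) (hne x y)))
        = if x * φ e1 + φ e2 + y * φ e3 = 0 then 1 else 0 := by
      intro x y
      have : pt (x • e1 + e2 + y • e3) (hne x y) ∈ pointsIn F 4 H ↔
          x * φ e1 + φ e2 + y * φ e3 = 0 := by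
        simp only [pointsIn, Set.mem_ofPred_eq]
        rw [pt_le, hker, LinearMap.mem_ker]
        simp
      simp only [charVec, Set.indicator_apply, this, Pi.one_apply]
      split_ifs <;> simp
    simp only [hval]
    by_cases h1 : φ e1 = 0
    · refine ⟨0, by simp, fun y => ?_⟩
      simp only [h1, mul_zero, zero_add, eval_zero, ite_mul, one_mul, zero_mul]
      split_ifs with h2
      · exact (FiniteField.sum_pow_lt_card_sub_one F k hk).symm
      · simp
    · refine ⟨(C (-(φ e3) / φ e1) * X + C (-(φ e2) / φ e1)) ^ k, ?_, fun y => ?_⟩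
      · refine (natDegree_pow_le).trans ?_
        have := natDegree_linear_le (a := -(φ e3) / φ e1) (b := -(φ e2) / φ e1)
        nlinarith
      · rw [Finset.sum_eq_single (-(φ e3) / φ e1 * y + -(φ e2) / φ e1)]
        · rw [if_pos (by field_simp; ring)]
          simp
        · intro x _ hx
          rw [if_neg, zero_mul]
          intro h
          apply hx
          field_simp
          linear_combination h
        · simp
  | zero => exact ⟨0, by simp, fun y => by simp⟩
  | add a b _ _ ha hb =>
    obtain ⟨P, hP, hP'⟩ := ha
    obtain ⟨Q, hQ, hQ'⟩ := hb
    refine ⟨P + Q, natDegree_add_le_of_degree_le hP hQ, fun y => ?_⟩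
    simp only [eval_add, hP', hQ', Pi.add_apply, map_add, add_mul, Finset.sum_add_distrib]
  | smul r a _ ha =>
    obtain ⟨P, hP, hP'⟩ := ha
    refine ⟨C (ZMod.castHom (dvd_refl p) F r) * P, (natDegree_C_mul_le _ _).trans hP, fun y => ?_⟩
    simp only [eval_mul, eval_C, hP', Pi.smul_apply, smul_eq_mul, map_mul, Finset.mul_sum, mul_assoc]

lemma pt_eq_pt {F : Type} [Field F] {n : ℕ} {u v : Fin n → F} {hu : u ≠ 0} {hv : v ≠ 0}
    (h : pt u hu = pt v hv) : ∃ c : F, c ≠ 0 ∧ v = c • u := by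
  have h1 : v ∈ (pt u hu).1 := by
    rw [h, ← pt_le v hv]
  simp only [pt, Submodule.mem_span_singleton] at h1
  obtain ⟨c, hc⟩ := h1
  refine ⟨c, ?_, hc.symm⟩
  rintro rfl
  apply hv
  rw [← hc, zero_smul]

lemma pt_smul {F : Type} [Field F] {n : ℕ} {u v : Fin n → F} {hu : u ≠ 0} {hv : v ≠ 0}
    {c : F} (hc : c ≠ 0) (h : v = c • u) : pt v hv = pt u hu := by
  apply Subtype.ext
  simp only [pt]
  subst h
  exact Submodule.span_singleton_smul_eq (IsUnit.mk0 c hc) u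

lemma finrank_span_two {F : Type} [Field F] {n : ℕ} {u v : Fin n → F} (hu : u ≠ 0)
    (hv : v ∉ Submodule.span F {u}) : finrank F (Submodule.span F {u, v}) = 2 := by
  have h1 : LinearIndependent F ![u, v] := by
    rw [LinearIndependent.pair_iff' hu]
    intro a ha
    exact hv (Submodule.mem_span_singleton.mpr ⟨a, ha⟩)
  have h2 := finrank_span_eq_card h1
  have h3 : Set.range ![u, v] = {u, v} := by
    rw [Matrix.range_cons, Matrix.range_cons, Matrix.range_empty, Set.union_empty]; rfl
  rw [h3] at h2
  simpa using h2

open Polynomial Classical in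
lemma geom_ineq {F : Type} [Field F] [Fintype F] {p : ℕ} [CharP F p]
    (V : Set (ProjPoint F 4)) (hcode : charVec F p 4 V ∈ hypCode F p 4)
    (π ℓ : Submodule F (Fin 4 → F)) (hπ : finrank F π = 3) (hℓ : finrank F ℓ = 2) (hle : ℓ ≤ π)
    (R : ProjPoint F 4) (hRV : R ∉ V) (hR : R.1 ≤ ℓ) :
    ∃ m : Submodule F (Fin 4 → F), m ≤ π ∧ finrank F m = 2 ∧
      Fintype.card F * secant F 4 V ℓ + secant F 4 V m
        ≤ secant F 4 V ℓ * (secant F 4 V ℓ - 1) + secant F 4 V π := by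
  obtain ⟨e1, he1, rfl⟩ := exists_pt R
  have he1ℓ := (pt_le e1 he1 ℓ).mp hR
  obtain ⟨e2, he2ℓ, he2⟩ : ∃ e2 ∈ ℓ, e2 ∉ Submodule.span F {e1} := by
    apply SetLike.exists_of_lt
    apply lt_of_le_of_ne hR
    intro h
    have h2 : finrank F (pt e1 he1).1 = finrank F ℓ := by rw [← h]
    rw [(pt e1 he1).2] at h2; omega
  obtain ⟨e3, he3π, he3⟩ : ∃ e3 ∈ π, e3 ∉ ℓ := by
    apply SetLike.exists_of_lt
    apply lt_of_le_of_ne hle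
    rintro rfl; omega
  have hind : ∀ a b c : F, a • e1 + b • e2 + c • e3 = 0 → a = 0 ∧ b = 0 ∧ c = 0 := by
    intro a b c h
    have hc : c = 0 := by
      by_contra hc
      apply he3
      have : e3 = (-(c⁻¹ * a)) • e1 + (-(c⁻¹ * b)) • e2 := by
        have h3 : c⁻¹ • (a • e1 + b • e2 + c • e3) = 0 := by rw [h, smul_zero]
        rw [smul_add, smul_add, smul_smul, smul_smul, smul_smul, inv_mul_cancel₀ hc, one_smul] at h3
        rw [neg_smul, neg_smul]
        linear_combination h3
      rw [this]
      exact ℓ.add_mem (ℓ.smul_mem _ he1ℓ) (ℓ.smul_mem _ he2ℓ)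
    subst hc
    have hb : b = 0 := by
      by_contra hb
      apply he2
      rw [Submodule.mem_span_singleton]
      refine ⟨-(b⁻¹ * a), ?_⟩
      have h3 : b⁻¹ • (a • e1 + b • e2 + (0 : F) • e3) = 0 := by rw [h, smul_zero]
      rw [smul_add, smul_add, smul_smul, smul_smul, inv_mul_cancel₀ hb, one_smul, zero_smul,
        smul_zero] at h3
      rw [neg_smul]
      linear_combination -h3
    subst hb
    refine ⟨?_, rfl, rfl⟩
    simp only [zero_smul, add_zero, smul_eq_zero] at h
    exact h.resolve_right he1
  have hne : ∀ x y : F, x • e1 + e2 + y • e3 ≠ 0 := by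
    intro x y h
    have := hind x 1 y (by rw [one_smul]; exact h)
    exact one_ne_zero this.2.1
  have hinj : ∀ x y x' y' : F, pt _ (hne x y) = pt _ (hne x' y') → x = x' ∧ y = y' := by
    intro x y x' y' h
    obtain ⟨c, hc, h2⟩ := pt_eq_pt h
    have h3 := hind (x' - c * x) (1 - c) (y' - c * y) (by
      simp only [sub_smul, one_smul, mul_smul]
      rw [smul_add, smul_add] at h2
      linear_combination h2)
    obtain ⟨h4, h5, h6⟩ := h3
    have hc1 : c = 1 := by linear_combination -h5
    subst hc1
    exact ⟨by linear_combination -h4, by linear_combination -h6⟩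
  let A : F → Finset F := fun y => Finset.univ.filter (fun x => pt _ (hne x y) ∈ V)
  have hA : ∀ k : ℕ, ∃ P : F[X], P.natDegree ≤ k ∧ ∀ y, P.eval y = ∑ x ∈ A y, x ^ k := by
    intro k
    by_cases hk : k < Fintype.card F - 1
    · obtain ⟨P, hP, hP'⟩ := power_poly _ hcode e1 e2 e3 hne k hk
      refine ⟨P, hP, fun y => ?_⟩
      rw [hP', Finset.sum_filter]
      apply Finset.sum_congr rfl
      intro x _
      simp only [charVec, Set.indicator_apply, Pi.one_apply]
      split_ifs <;> simp
    · refine ⟨Lagrange.interpolate Finset.univ id (fun y => ∑ x ∈ A y, x ^ k), ?_, fun y => ?_⟩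
      · have := Lagrange.degree_interpolate_le (s := (Finset.univ : Finset F)) (v := id)
          (fun y => ∑ x ∈ A y, x ^ k) (Set.injOn_id _)
        rw [Finset.card_univ] at this
        have h2 := natDegree_le_of_degree_le this
        omega
      · exact Lagrange.eval_interpolate_at_node (s := (Finset.univ : Finset F)) (v := id)
          (fun y => ∑ x ∈ A y, x ^ k) (Set.injOn_id _) (Finset.mem_univ y)
  have hmain := hankel_ineq A hA 0
  have hℓspan : ∀ v ∈ ℓ, ∃ a b : F, a • e1 + b • e2 = v := by
    intro v hv
    have h1 : Submodule.span F {e1, e2} = ℓ := by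
      apply Submodule.eq_of_le_of_finrank_eq
      · rw [Submodule.span_le]
        rintro w (rfl | rfl) <;> assumption
      · rw [finrank_span_two he1 he2, hℓ]
    rw [← h1] at hv
    exact Submodule.mem_span_pair.mp hv
  have hA0 : (A 0).card = secant F 4 V ℓ := by
    rw [secant_eq]
    apply Finset.card_bij (fun x _ => pt _ (hne x 0))
    · intro x hx
      simp only [A, Finset.mem_filter, Finset.mem_univ, true_and] at hx ⊢
      refine ⟨hx, ?_⟩
      rw [pt_le, zero_smul, add_zero]
      exact ℓ.add_mem (ℓ.smul_mem _ he1ℓ) he2ℓ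
    · intro x _ x' _ h
      exact (hinj _ _ _ _ h).1
    · intro P hP
      simp only [A, Finset.mem_filter, Finset.mem_univ, true_and] at hP ⊢
      obtain ⟨hPV, hPℓ⟩ := hP
      obtain ⟨v, hv, rfl⟩ := exists_pt P
      obtain ⟨a, b, hab⟩ := hℓspan v ((pt_le v hv ℓ).mp hPℓ)
      have hb : b ≠ 0 := by
        rintro rfl
        rw [zero_smul, add_zero] at hab
        have ha : a ≠ 0 := by
          rintro rfl
          apply hv; rw [← hab, zero_smul]
        apply hRV
        rw [← pt_smul (hu := he1) (hv := hv) ha hab.symm]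
        exact hPV
      have heq : pt v hv = pt _ (hne (a / b) 0) := by
        apply pt_smul hb
        rw [← hab, zero_smul, add_zero, smul_add, smul_smul, mul_div_cancel₀ _ hb]
      exact ⟨a / b, by rw [← heq]; exact hPV, heq.symm⟩
  have he31 : e3 ∉ Submodule.span F {e1} := fun h => he3 (hR h)
  refine ⟨Submodule.span F {e1, e3}, ?_, finrank_span_two he1 he31, ?_⟩
  · rw [Submodule.span_le]
    rintro w (rfl | rfl)
    · exact hle he1ℓ
    · exact he3π
  have hsum : ∑ y, (A y).card + secant F 4 V (Submodule.span F {e1, e3}) ≤ secant F 4 V π := by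
    rw [secant_eq, secant_eq, ← Finset.card_sigma]
    have hc : (Finset.univ.sigma A).card
        = ((Finset.univ.sigma A).image (fun z => pt _ (hne z.2 z.1))).card := by
      rw [Finset.card_image_of_injOn]
      rintro ⟨y, x⟩ _ ⟨y', x'⟩ _ h
      obtain ⟨h1, h2⟩ := hinj _ _ _ _ h
      subst h1; subst h2; rfl
    rw [hc, ← Finset.card_union_of_disjoint]
    · apply Finset.card_le_card
      intro P hP
      rw [Finset.mem_union] at hP
      rw [Finset.mem_filter]
      rcases hP with hP | hP
      · rw [Finset.mem_image] at hP
        obtain ⟨⟨y, x⟩, hz, rfl⟩ := hP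
        simp only [A, Finset.mem_sigma, Finset.mem_filter, Finset.mem_univ, true_and] at hz
        refine ⟨Finset.mem_univ _, hz, ?_⟩
        rw [pt_le]
        exact π.add_mem (π.add_mem (π.smul_mem _ (hle he1ℓ)) (hle he2ℓ)) (π.smul_mem _ he3π)
      · rw [Finset.mem_filter] at hP
        refine ⟨Finset.mem_univ _, hP.2.1, hP.2.2.trans ?_⟩
        rw [Submodule.span_le]
        rintro w (rfl | rfl)
        · exact hle he1ℓ
        · exact he3π
    · rw [Finset.disjoint_left]
      intro P hP hP2
      rw [Finset.mem_image] at hP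
      obtain ⟨⟨y, x⟩, hz, rfl⟩ := hP
      rw [Finset.mem_filter, pt_le, Submodule.mem_span_pair] at hP2
      obtain ⟨a, b, hab⟩ := hP2.2.2
      have := hind (a - x) (-1) (b - y) (by
        simp only [sub_smul, neg_smul, one_smul]
        linear_combination hab)
      exact one_ne_zero (neg_eq_zero.mp this.2.1)
  rw [hA0] at hmain
  set s := secant F 4 V ℓ
  have h1 : Fintype.card F * s ≤ ∑ y, (s - (A y).card) + ∑ y, (A y).card := by
    rw [← Finset.sum_add_distrib]
    calc Fintype.card F * s = ∑ y : F, s := by simp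
      _ ≤ _ := Finset.sum_le_sum (fun y _ => by omega)
  omega

lemma comb {P L : Type} [DecidableEq P] [DecidableEq L] (I : P → L → Prop)
    [∀ a b, Decidable (I a b)] (S : Finset P) (Λ : Finset L) (q : ℕ) (hq : 5 ≤ q)
    (hS : S.card = q ^ 3 + q ^ 2 + 1) (s : L → ℕ)
    (hs : ∀ l, s l = (S.filter (fun a => I a l)).card)
    (h1 : ∀ a ∈ S, ∀ b ∈ S, a ≠ b → (Λ.filter (fun l => I a l ∧ I b l)).card = 1)
    (h2 : ∀ a ∈ S, (Λ.filter (fun l => I a l)).card ≤ q ^ 2 + 1)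
    (h3 : ∀ l ∈ Λ, s l ≤ q ^ 2 + 1) (h5 : ∀ l ∈ Λ, 1 ≤ s l)
    (h4 : ∀ l ∈ Λ, s l ≤ q + 1 ∨ q ^ 2 ≤ s l + q + 1)
    (h6 : ∀ l ∈ Λ, ∀ l' ∈ Λ, l ≠ l' → s l = q ^ 2 + 1 → s l' = q ^ 2 + 1 →
      ∃ a ∈ S, I a l ∧ I a l') :
    ∀ l ∈ Λ, s l = 1 ∨ s l = q + 1 ∨ s l = q ^ 2 + 1 := by
  -- intersections of two lines
  let c : L → L → ℕ := fun l l' => (S.filter (fun a => I a l ∧ I a l')).card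
  have hcself : ∀ l, c l l = s l := by intro l; simp [c, hs]
  have hcle : ∀ l ∈ Λ, ∀ l' ∈ Λ, l ≠ l' → c l l' ≤ 1 := by
    intro l hl l' hl' hne
    by_contra hcon
    obtain ⟨a, ha, b, hb, hab⟩ := Finset.one_lt_card.mp (not_le.mp hcon)
    rw [Finset.mem_filter] at ha hb
    have h := h1 a ha.1 b hb.1 hab
    exact hne (Finset.card_le_one.mp h.le l (by simp [hl, ha.2.1, hb.2.1]) l'
      (by simp [hl', ha.2.2, hb.2.2]))
  -- double counting at a point
  have hpt : ∀ a ∈ S, ∑ l ∈ Λ.filter (fun l => I a l), s l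
      = q ^ 3 + q ^ 2 + (Λ.filter (fun l => I a l)).card := by
    intro a ha
    have e1 : ∑ l ∈ Λ.filter (fun l => I a l), s l
        = ∑ b ∈ S, (Λ.filter (fun l => I a l ∧ I b l)).card := by
      simp only [hs]
      have := Finset.sum_card_bipartiteAbove_eq_sum_card_bipartiteBelow I
        (s := S) (t := Λ.filter (fun l => I a l))
      simp only [Finset.bipartiteAbove, Finset.bipartiteBelow, Finset.filter_filter] at this
      exact this.symm
    rw [e1, ← Finset.add_sum_erase _ _ ha]
    have e2 : ∑ b ∈ S.erase a, (Λ.filter (fun l => I a l ∧ I b l)).card = q ^ 3 + q ^ 2 := by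
      rw [Finset.sum_congr rfl (g := fun _ => 1)]
      · rw [Finset.sum_const, Finset.card_erase_of_mem ha, hS]; simp
      · intro b hb
        rw [Finset.mem_erase] at hb
        exact h1 a ha b hb.2 (Ne.symm hb.1)
    rw [e2]
    simp only [and_self]
    ring
  let G := Λ.filter (fun l => q + 1 < s l)
  have hGΛ : G ⊆ Λ := Finset.filter_subset _ _
  have hGlong : ∀ l ∈ G, q ^ 2 ≤ s l + q + 1 := by
    intro l hl
    rw [Finset.mem_filter] at hl
    rcases h4 l hl.1 with h | h
    · omega
    · exact h
  let d : P → ℕ := fun a => (G.filter (fun l => I a l)).card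
  let f : L → ℕ := fun l => if q + 1 < s l then q ^ 2 + 1 else q + 1
  have hsf : ∀ l ∈ Λ, s l ≤ f l := by
    intro l hl
    simp only [f]
    split_ifs with h
    · exact h3 l hl
    · omega
  have hfsum : ∀ a, ∑ l ∈ Λ.filter (fun l => I a l), f l + d a * (q + 1)
      = (q ^ 2 + 1) * d a + (Λ.filter (fun l => I a l)).card * (q + 1) := by
    intro a
    simp only [f]
    rw [Finset.sum_ite]
    simp only [Finset.sum_const, smul_eq_mul]
    have e1 : ((Λ.filter (fun l => I a l)).filter (fun l => q + 1 < s l)).card = d a := by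
      simp only [d, G, Finset.filter_filter, and_comm]
    have e2 := Finset.card_filter_add_card_filter_not (s := Λ.filter (fun l => I a l))
      (fun l => q + 1 < s l)
    rw [e1] at e2 ⊢
    rw [← e2]
    ring
  have hd1 : ∀ a ∈ S, 1 ≤ d a := by
    intro a ha
    by_contra hcon
    have hd0 : d a = 0 := by omega
    have e1 := hfsum a
    have e2 := hpt a ha
    have e3 : ∑ l ∈ Λ.filter (fun l => I a l), s l ≤ ∑ l ∈ Λ.filter (fun l => I a l), f l :=
      Finset.sum_le_sum (fun l hl => hsf l (Finset.mem_filter.mp hl).1)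
    have e4 := h2 a ha
    rw [hd0] at e1
    nlinarith
  have hsimple : ∀ a ∈ S, d a = 1 → ∀ l ∈ Λ, I a l → s l = f l := by
    intro a ha hda l hl hal
    have e1 := hfsum a
    have e2 := hpt a ha
    have e4 := h2 a ha
    have e3 : ∀ l ∈ Λ.filter (fun l => I a l), s l ≤ f l :=
      (fun l hl => hsf l (Finset.mem_filter.mp hl).1)
    have e5 := Finset.sum_le_sum e3
    rw [hda] at e1
    have e6 : ∑ l ∈ Λ.filter (fun l => I a l), s l = ∑ l ∈ Λ.filter (fun l => I a l), f l := by
      apply le_antisymm e5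
      nlinarith
    exact (Finset.sum_eq_sum_iff_of_le e3).mp e6 l (by simp [hl, hal])
  -- moments
  have hmom1 : ∀ T : Finset L, ∑ a ∈ S, (T.filter (fun l => I a l)).card = ∑ l ∈ T, s l := by
    intro T
    simp only [hs]
    exact Finset.sum_card_bipartiteAbove_eq_sum_card_bipartiteBelow I
  have hmom2 : ∀ T : Finset L, ∑ a ∈ S, (T.filter (fun l => I a l)).card ^ 2
      = ∑ l ∈ T, s l + ∑ l ∈ T, ∑ l' ∈ T.erase l, c l l' := by
    intro T
    have e1 : ∑ a ∈ S, (T.filter (fun l => I a l)).card ^ 2 = ∑ l ∈ T, ∑ l' ∈ T, c l l' := by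
      simp only [c, Finset.card_filter, sq, Finset.sum_mul_sum]
      rw [Finset.sum_comm]
      apply Finset.sum_congr rfl
      intro l _
      rw [Finset.sum_comm]
      apply Finset.sum_congr rfl
      intro l' _
      apply Finset.sum_congr rfl
      intro a _
      by_cases x1 : I a l <;> by_cases x2 : I a l' <;> simp [x1, x2]
    rw [e1, ← Finset.sum_add_distrib]
    apply Finset.sum_congr rfl
    intro l hl
    rw [← Finset.add_sum_erase _ _ hl, hcself]
  have herase : ∀ T : Finset L, ∀ l ∈ T, ∑ l' ∈ T.erase l, 1 = T.card - 1 := by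
    intro T l hl
    rw [Finset.sum_const, Finset.card_erase_of_mem hl]; simp
  have hE1 : ∀ T ⊆ Λ, 2 * ∑ l ∈ T, s l ≤ T.card * (T.card - 1) + 2 * S.card := by
    intro T hT
    have e1 := hmom1 T
    have e2 := hmom2 T
    have e3 : ∑ l ∈ T, ∑ l' ∈ T.erase l, c l l' ≤ T.card * (T.card - 1) := by
      calc _ ≤ ∑ l ∈ T, (T.card - 1) := by
            apply Finset.sum_le_sum
            intro l hl
            rw [← herase T l hl]
            apply Finset.sum_le_sum
            intro l' hl'
            rw [Finset.mem_erase] at hl'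
            exact hcle l (hT hl) l' (hT hl'.2) (Ne.symm hl'.1)
        _ = _ := by simp
    have e4 : 3 * ∑ a ∈ S, (T.filter (fun l => I a l)).card
        ≤ ∑ a ∈ S, (T.filter (fun l => I a l)).card ^ 2 + 2 * S.card := by
      have : 2 * S.card = ∑ a ∈ S, 2 := by rw [Finset.sum_const, smul_eq_mul, mul_comm]
      rw [this, Finset.mul_sum, ← Finset.sum_add_distrib]
      apply Finset.sum_le_sum
      intro a _
      generalize (T.filter (fun l => I a l)).card = t
      rcases t with _ | _ | t
      · simp
      · simp
      · nlinarith
    omega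
  have hM : G.card ≤ 2 * q := by
    by_contra hcon
    obtain ⟨T, hT, hTc⟩ := Finset.exists_subset_card_eq (s := G) (n := 2 * q + 1) (by omega)
    have e1 := hE1 T (hT.trans hGΛ)
    have e2 : T.card * (q ^ 2) ≤ ∑ l ∈ T, s l + T.card * (q + 1) := by
      have : ∑ l ∈ T, q ^ 2 ≤ ∑ l ∈ T, (s l + (q + 1)) := by
        apply Finset.sum_le_sum
        intro l hl
        have := hGlong l (hT hl)
        omega
      rw [Finset.sum_add_distrib, Finset.sum_const, Finset.sum_const] at this
      simpa using this
    rw [hTc, hS] at e1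
    rw [hTc] at e2
    rw [Nat.add_sub_cancel] at e1
    obtain ⟨r, rfl⟩ := Nat.exists_eq_add_of_le hq
    nlinarith [sq_nonneg r, pow_nonneg (Nat.zero_le r) 3]
  have hfull : ∀ g ∈ G, s g = q ^ 2 + 1 := by
    intro g hg
    by_contra hcon
    have hgf : f g = q ^ 2 + 1 := by
      simp only [f]; rw [if_pos (Finset.mem_filter.mp hg).2]
    have e1 : ∀ a ∈ S.filter (fun a => I a g), 2 ≤ d a := by
      intro a ha
      rw [Finset.mem_filter] at ha
      have x1 := hd1 a ha.1
      by_contra x2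
      have := hsimple a ha.1 (by omega) g (hGΛ hg) ha.2
      omega
    have e2 : ∑ a ∈ S.filter (fun a => I a g), d a = ∑ l ∈ G, c g l := by
      simp only [d, c]
      have := Finset.sum_card_bipartiteAbove_eq_sum_card_bipartiteBelow I
        (s := S.filter (fun a => I a g)) (t := G)
      simp only [Finset.bipartiteAbove, Finset.bipartiteBelow, Finset.filter_filter] at this
      exact this
    have e3 : ∑ l ∈ G, c g l ≤ s g + (G.card - 1) := by
      rw [← Finset.add_sum_erase _ _ hg, hcself, ← herase G g hg]
      apply Nat.add_le_add_left
      apply Finset.sum_le_sum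
      intro l' hl'
      rw [Finset.mem_erase] at hl'
      exact hcle g (hGΛ hg) l' (hGΛ hl'.2) (Ne.symm hl'.1)
    have e4 := Finset.sum_le_sum e1
    rw [Finset.sum_const, ← hs, smul_eq_mul] at e4
    have e5 := hGlong g hg
    have e6 : s g ≤ 2 * q - 1 := by omega
    have e7 : q ^ 2 ≤ 3 * q := by omega
    nlinarith
  have hsumG : ∑ l ∈ G, s l = G.card * (q ^ 2 + 1) := by
    rw [Finset.sum_congr rfl hfull]; simp
  have hMeq : G.card = q + 1 := by
    have e1 := hE1 G hGΛ
    have e2 := hmom1 G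
    have e3 : ∑ a ∈ S, 1 ≤ ∑ a ∈ S, d a := Finset.sum_le_sum hd1
    have e4 : ∑ a ∈ S, d a = G.card * (q ^ 2 + 1) := by rw [← hsumG, ← e2]
    rw [e4, Finset.sum_const, hS] at e3
    rw [hsumG, hS] at e1
    have x1 : q + 1 ≤ G.card := by
      by_contra hcon
      have : G.card ≤ q := by omega
      have := Nat.mul_le_mul_right (q ^ 2 + 1) this
      simp only [smul_eq_mul, mul_one] at e3
      nlinarith
    by_contra hcon
    obtain ⟨m, hm⟩ : ∃ m, G.card = m + 1 := ⟨G.card - 1, by omega⟩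
    rw [hm] at e1 hM x1 hcon
    rw [Nat.add_sub_cancel] at e1
    obtain ⟨k, rfl⟩ : ∃ k, m = q + 1 + k := ⟨m - (q + 1), by omega⟩
    obtain ⟨j, hj⟩ : ∃ j, q = k + 2 + j := ⟨q - (k + 2), by omega⟩
    subst hj
    nlinarith [Nat.zero_le (k * j), Nat.zero_le (k * k * j), Nat.zero_le (k * j * j), Nat.zero_le (k ^ 3), Nat.zero_le (j ^ 3), Nat.zero_le (k^2), Nat.zero_le (j^2)]
  have hdle : ∀ a, d a ≤ q + 1 := by
    intro a; rw [← hMeq]; exact Finset.card_filter_le _ _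
  have hd2 : ∀ a ∈ S, d a = 1 ∨ d a = q + 1 := by
    have e1 : ∑ a ∈ S, d a = (q + 1) * (q ^ 2 + 1) := by
      rw [← hMeq, ← hsumG, ← hmom1 G]
    have e2 : ∑ a ∈ S, d a ^ 2 = (q + 1) * (q ^ 2 + 1) + (q + 1) * q := by
      rw [hmom2 G, hsumG, hMeq]
      congr 1
      have : ∀ l ∈ G, ∑ l' ∈ G.erase l, c l l' = q := by
        intro l hl
        have x0 := herase G l hl
        rw [hMeq, Nat.add_sub_cancel] at x0
        rw [← x0]
        apply Finset.sum_congr rfl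
        intro l' hl'
        rw [Finset.mem_erase] at hl'
        apply le_antisymm (hcle l (hGΛ hl) l' (hGΛ hl'.2) (Ne.symm hl'.1))
        obtain ⟨a, ha, hal⟩ := h6 l (hGΛ hl) l' (hGΛ hl'.2) (Ne.symm hl'.1) (hfull l hl)
          (hfull l' hl'.2)
        exact Finset.card_pos.mpr ⟨a, by simp [ha, hal]⟩
      rw [Finset.sum_congr rfl this, Finset.sum_const, hMeq, smul_eq_mul]
    have e3 : ∑ a ∈ S, (((d a : ℤ) - 1) * (q + 1 - d a)) = 0 := by
      have x1 : ∀ a ∈ S, (((d a : ℤ) - 1) * (q + 1 - d a))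
          = (q + 2) * (d a : ℤ) - (d a : ℤ) ^ 2 - (q + 1) := by intro a _; ring
      rw [Finset.sum_congr rfl x1, Finset.sum_sub_distrib, Finset.sum_sub_distrib,
        ← Finset.mul_sum, Finset.sum_const, hS]
      have y1 : ∑ a ∈ S, (d a : ℤ) = (q + 1) * (q ^ 2 + 1) := by exact_mod_cast e1
      have y2 : ∑ a ∈ S, (d a : ℤ) ^ 2 = (q + 1) * (q ^ 2 + 1) + (q + 1) * q := by
        exact_mod_cast e2
      rw [y1, y2]
      simp only [nsmul_eq_mul]
      push_cast
      ring
    intro a ha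
    have e4 := (Finset.sum_eq_zero_iff_of_nonneg (fun a ha => by
      have x1 := hd1 a ha
      have x2 := hdle a
      have x3 : (0 : ℤ) ≤ (d a : ℤ) - 1 := by omega
      have x4 : (0 : ℤ) ≤ q + 1 - (d a : ℤ) := by omega
      exact mul_nonneg x3 x4)).mp e3 a ha
    rcases mul_eq_zero.mp e4 with h | h
    · left; omega
    · right; omega
  intro l hl
  by_cases hlG : q + 1 < s l
  · right; right
    exact hfull l (Finset.mem_filter.mpr ⟨hl, hlG⟩)
  by_cases hex : ∃ a ∈ S, I a l ∧ d a = 1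
  · obtain ⟨a, ha, hal, hda⟩ := hex
    right; left
    rw [hsimple a ha hda l hl hal]
    simp only [f]; rw [if_neg hlG]
  left
  push Not at hex
  apply le_antisymm _ (h5 l hl)
  by_contra hcon
  rw [hs] at hcon
  obtain ⟨a, ha, b, hb, hab⟩ := Finset.one_lt_card.mp (not_le.mp hcon)
  rw [Finset.mem_filter] at ha hb
  have hall : ∀ a ∈ S, I a l → ∀ g ∈ G, I a g := by
    intro a ha hal
    have x1 := (hd2 a ha).resolve_left (hex a ha hal)
    rw [← hMeq] at x1
    exact Finset.card_filter_eq_iff.mp x1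
  have hsub : G ⊆ Λ.filter (fun l => I a l ∧ I b l) := by
    intro g hg
    rw [Finset.mem_filter]
    exact ⟨hGΛ hg, hall a ha.1 ha.2 g hg, hall b hb.1 hb.2 g hg⟩
  have := Finset.card_le_card hsub
  rw [h1 a ha.1 b hb.1 hab, hMeq] at this
  omega

lemma numeric (p h q s m : ℕ) (hp : p.Prime) (hh : 1 ≤ h) (hq : q = p ^ h) (hq4 : 4 < q)
    (hs : (s : ZMod p) = 1) (hm : 1 ≤ m)
    (hle : q ^ 2 * s + m ≤ s * (s - 1) + (q ^ 3 + q ^ 2 + 1)) :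
    s ≤ q + 1 ∨ q ^ 2 ≤ s + q + 1 := by
  by_contra hcon
  push Not at hcon
  obtain ⟨hc1, hc2⟩ := hcon
  have hpq : p ∣ q := by rw [hq]; exact dvd_pow_self p (by omega)
  have hdvd : p ∣ s - (q + 1) := by
    have : ((s - (q + 1) : ℕ) : ZMod p) = 0 := by
      rw [Nat.cast_sub hc1.le, hs]
      push_cast
      rw [(ZMod.natCast_eq_zero_iff q p).mpr hpq]
      ring
    exact (ZMod.natCast_eq_zero_iff _ p).mp this
  have h2 := hp.two_le
  have hps : p ≤ s - (q + 1) := Nat.le_of_dvd (by omega) hdvd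
  obtain ⟨t, ht⟩ : ∃ t, s = t + 1 := ⟨s - 1, by omega⟩
  by_cases hq7 : 7 ≤ q
  · obtain ⟨a, ha⟩ : ∃ a, s = q + 3 + a := ⟨s - (q + 3), by omega⟩
    obtain ⟨b, hb⟩ : ∃ b, q ^ 2 = s + q + 2 + b := ⟨q ^ 2 - (s + q + 2), by omega⟩
    rw [ht, Nat.add_sub_cancel] at hle
    zify at *
    have e1 : ((q : ℤ) ^ 2 + 1 - s) * s ≤ q ^ 3 + q ^ 2 := by rw [ht]; nlinarith
    have e2 : ((q : ℤ) ^ 2 + 1 - s) * s = (q + 3) * (q ^ 2 - q - 2) + a * b := by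
      have x1 : (q : ℤ) ^ 2 + 1 - s = q + 3 + b := by linarith
      have x2 : (q : ℤ) ^ 2 - q - 2 = q + 3 + a + b := by linarith
      rw [x1, x2, ha]; ring
    have e3 : (0 : ℤ) ≤ a * b := by positivity
    nlinarith
  · have hq6 : q ≠ 6 := by
      intro h6
      have x2 : 2 ∣ p ^ h := by rw [← hq, h6]; norm_num
      have x3 : 3 ∣ p ^ h := by rw [← hq, h6]; norm_num
      have y2 := (Nat.prime_dvd_prime_iff_eq Nat.prime_two hp).mp (Nat.prime_two.dvd_of_dvd_pow x2)
      have y3 := (Nat.prime_dvd_prime_iff_eq Nat.prime_three hp).mp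
        (Nat.prime_three.dvd_of_dvd_pow x3)
      omega
    have hq5 : q = 5 := by omega
    clear hq
    subst hq5
    have hp5 : p = 5 := (Nat.prime_dvd_prime_iff_eq hp Nat.prime_five).mp hpq
    subst hp5
    rw [ht, Nat.add_sub_cancel] at hle
    have ht18 : t < 18 := by omega
    have ht5 : 5 < t := by omega
    subst ht
    clear hs hp hpq h2 hps hc1 hc2
    interval_cases t <;> omega

open Classical in
lemma card_lines {F : Type} [Field F] [Fintype F] (π : Submodule F (Fin 4 → F))
    (hπ : finrank F π = 3) (P : ProjPoint F 4) (hP : P.1 ≤ π)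
    (Λ : Finset (Submodule F (Fin 4 → F)))
    (hΛ : ∀ l ∈ Λ, l ≤ π ∧ finrank F l = 2) :
    (Λ.filter (fun l => P.1 ≤ l)).card ≤ Fintype.card F + 1 := by
  obtain ⟨X, hX⟩ := exists_isCompl P.1
  have hsup : P.1 ⊔ (X ⊓ π) = π := by
    rw [← sup_inf_assoc_of_le X hP, hX.sup_eq_top, top_inf_eq]
  have hinf : P.1 ⊓ (X ⊓ π) = ⊥ := by
    rw [← inf_assoc, hX.inf_eq_bot, bot_inf_eq]
  have hm : finrank F ↥(X ⊓ π) = 2 := by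
    have := Submodule.finrank_sup_add_finrank_inf_eq P.1 (X ⊓ π)
    rw [hsup, hinf, hπ, P.2, finrank_bot] at this
    omega
  have hcm := card_pointsIn (X ⊓ π)
  rw [hm] at hcm
  simp only [Finset.sum_range_succ, Finset.sum_range_zero, pow_zero, pow_one, zero_add] at hcm
  rw [add_comm, ← hcm]
  have key : ∀ l ∈ Λ.filter (fun l => P.1 ≤ l), P.1 ⊔ ((X ⊓ π) ⊓ l) = l ∧
      finrank F ↥((X ⊓ π) ⊓ l) = 1 := by
    intro l hl
    rw [Finset.mem_filter] at hl
    have e1 : P.1 ⊔ ((X ⊓ π) ⊓ l) = l := by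
      rw [← sup_inf_assoc_of_le _ hl.2, hsup, inf_eq_right]
      exact (hΛ l hl.1).1
    refine ⟨e1, ?_⟩
    have e2 : P.1 ⊓ ((X ⊓ π) ⊓ l) = ⊥ := by rw [← inf_assoc, hinf, bot_inf_eq]
    have := Submodule.finrank_sup_add_finrank_inf_eq P.1 ((X ⊓ π) ⊓ l)
    rw [e1, e2, (hΛ l hl.1).2, P.2, finrank_bot] at this
    omega
  have step : (Λ.filter (fun l => P.1 ≤ l)).card ≤
      ((Finset.univ.filter (fun P' : ProjPoint F 4 => P'.1 ≤ X ⊓ π)).image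
        (fun P' => P'.1)).card := by
    apply Finset.card_le_card_of_injOn (fun l => (X ⊓ π) ⊓ l)
    · intro l hl
      rw [Finset.mem_coe, Finset.mem_image]
      refine ⟨(⟨(X ⊓ π) ⊓ l, (key l hl).2⟩ : ProjPoint F 4), ?_, rfl⟩
      exact Finset.mem_filter.mpr ⟨Finset.mem_univ _, inf_le_left⟩
    · intro l hl l' hl' h
      have h2 : (X ⊓ π) ⊓ l = (X ⊓ π) ⊓ l' := h
      rw [← (key l hl).1, ← (key l' hl').1, h2]
  refine step.trans (Finset.card_image_le.trans (le_of_eq ?_))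
  congr

lemma two_points {F : Type} [Field F] (P R : ProjPoint F 4) (h : P ≠ R) :
    finrank F ↥(P.1 ⊔ R.1) = 2 := by
  have h1 := Submodule.finrank_sup_add_finrank_inf_eq P.1 R.1
  rw [P.2, R.2] at h1
  have h2 : finrank F ↥(P.1 ⊓ R.1) = 0 := by
    by_contra h0
    apply h
    have x1 : P.1 ⊓ R.1 = P.1 := Submodule.eq_of_le_of_finrank_le inf_le_left (by rw [P.2]; omega)
    have x2 : P.1 ⊓ R.1 = R.1 := Submodule.eq_of_le_of_finrank_le inf_le_right (by rw [R.2]; omega)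
    exact Subtype.ext (x1.symm.trans x2)
  omega

/-- in PG(3, q²), if a plane `π` meets `V` in `q³ + q² + 1` points,
then every line of `π` meets `π ∩ V` in `1`, `q + 1` or `q² + 1` points. -/
theorem stmt11 (p h q : ℕ) (hp : p.Prime) (hh : 1 ≤ h) (hq : q = p ^ h) (hq4 : 4 < q)
    (F : Type) [Field F] [Fintype F] (hF : Fintype.card F = q ^ 2)
    (V : Set (ProjPoint F (3 + 1))) (hV : IsQuasiHermitian F q 3 V)
    (hcode : charVec F p (3 + 1) V ∈ hypCode F p (3 + 1))
    (π : Submodule F (Fin (3 + 1) → F)) (hπ : finrank F π = 3)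
    (hsize : secant F (3 + 1) V π = q ^ 3 + q ^ 2 + 1) :
    ∀ ℓ : Submodule F (Fin (3 + 1) → F), ℓ ≤ π → finrank F ℓ = 2 →
      secant F (3 + 1) V ℓ = 1 ∨ secant F (3 + 1) V ℓ = q + 1 ∨
        secant F (3 + 1) V ℓ = q ^ 2 + 1 := by
  classical
  have hF' : (Fintype.card F : ZMod p) = 0 := by
    rw [hF, hq, ZMod.natCast_eq_zero_iff]
    exact dvd_pow (dvd_pow_self p (by omega)) (by norm_num)
  haveI : Fact p.Prime := ⟨hp⟩
  haveI : CharP F p := by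
    have hc : Fintype.card F = p ^ (h * 2) := by rw [hF, hq, ← pow_mul]
    exact charP_of_card_eq_prime_pow hc
  obtain ⟨σ, hσ⟩ := sum_const hF' (by norm_num) _ hcode
  have hcast : ∀ W : Submodule F (Fin (3 + 1) → F), 2 ≤ finrank F W →
      (secant F (3 + 1) V W : ZMod p) = 1 := by
    intro W hW
    have e1 := hσ W hW
    have e2 := hσ π (by omega)
    rw [secant_cast] at e1 e2
    rw [e1, ← e2, hsize]
    have : (q : ZMod p) = 0 := by
      rw [hq, ZMod.natCast_eq_zero_iff]; exact dvd_pow_self p (by omega)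
    push_cast
    rw [this]; simp
  have hpos : ∀ W : Submodule F (Fin (3 + 1) → F), 2 ≤ finrank F W →
      1 ≤ secant F (3 + 1) V W := by
    intro W hW
    by_contra h0
    have h1 := hcast W hW
    rw [show secant F (3 + 1) V W = 0 by omega] at h1
    simp at h1
  have hcardl : ∀ l : Submodule F (Fin (3 + 1) → F), finrank F l = 2 →
      (Finset.univ.filter (fun P : ProjPoint F (3 + 1) => P.1 ≤ l)).card = q ^ 2 + 1 := by
    intro l hl
    have := card_pointsIn l
    rw [hl, hF] at this
    simp only [Finset.sum_range_succ, Finset.sum_range_zero, pow_zero, pow_one, zero_add] at this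
    rw [this, add_comm]
  have hle : ∀ l : Submodule F (Fin (3 + 1) → F), finrank F l = 2 →
      secant F (3 + 1) V l ≤ q ^ 2 + 1 := by
    intro l hl
    rw [secant_eq, ← hcardl l hl]
    apply Finset.card_le_card
    intro P hP
    rw [Finset.mem_filter] at hP ⊢
    exact ⟨hP.1, hP.2.2⟩
  have hfullmem : ∀ l : Submodule F (Fin (3 + 1) → F), finrank F l = 2 →
      secant F (3 + 1) V l = q ^ 2 + 1 → ∀ P : ProjPoint F (3 + 1), P.1 ≤ l → P ∈ V := by
    intro l hl hs P hP
    rw [secant_eq, ← hcardl l hl] at hs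
    have hsub : Finset.univ.filter (fun P : ProjPoint F (3 + 1) => P ∈ V ∧ P.1 ≤ l)
        ⊆ Finset.univ.filter (fun P : ProjPoint F (3 + 1) => P.1 ≤ l) := by
      intro P hP
      rw [Finset.mem_filter] at hP ⊢
      exact ⟨hP.1, hP.2.2⟩
    have heq := Finset.eq_of_subset_of_card_le hsub hs.ge
    have : P ∈ Finset.univ.filter (fun P : ProjPoint F (3 + 1) => P.1 ≤ l) := by simp [hP]
    rw [← heq, Finset.mem_filter] at this
    exact this.2.1
  haveI : Fintype (Submodule F (Fin (3 + 1) → F)) := Fintype.ofFinite _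
  intro ℓ hℓπ hℓ
  let Λ : Finset (Submodule F (Fin (3 + 1) → F)) :=
    Finset.univ.filter (fun l => l ≤ π ∧ finrank F l = 2)
  have hΛ : ∀ l ∈ Λ, l ≤ π ∧ finrank F l = 2 := by
    intro l hl
    exact (Finset.mem_filter.mp hl).2
  let S : Finset (ProjPoint F (3 + 1)) := Finset.univ.filter (fun P => P ∈ V ∧ P.1 ≤ π)
  have hS : ∀ P ∈ S, P ∈ V ∧ P.1 ≤ π := by
    intro l hl
    exact (Finset.mem_filter.mp hl).2
  let s : Submodule F (Fin (3 + 1) → F) → ℕ :=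
    fun l => (S.filter (fun a => a.1 ≤ l)).card
  have hss : ∀ l ∈ Λ, s l = secant F (3 + 1) V l := by
    intro l hl
    rw [secant_eq]
    simp only [s, S, Finset.filter_filter]
    congr 1
    ext P
    simp only [Finset.mem_filter, Finset.mem_univ, true_and]
    constructor
    · rintro ⟨⟨x, y⟩, z⟩; exact ⟨x, z⟩
    · rintro ⟨x, z⟩; exact ⟨⟨x, z.trans (hΛ l hl).1⟩, z⟩
  have hℓΛ : ℓ ∈ Λ := Finset.mem_filter.mpr ⟨Finset.mem_univ _, hℓπ, hℓ⟩
  rw [← hss ℓ hℓΛ]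
  refine comb (fun (a : ProjPoint F (3 + 1)) (l : Submodule F (Fin (3 + 1) → F)) => a.1 ≤ l)
    S Λ q (by omega) ?_ s (fun l => rfl) ?_ ?_ ?_ ?_ ?_ ?_ ℓ hℓΛ
  · rw [← hsize, secant_eq]
  · intro a ha b hb hab
    have h2 := two_points a b hab
    rw [Finset.card_eq_one]
    refine ⟨a.1 ⊔ b.1, ?_⟩
    ext l
    rw [Finset.mem_filter, Finset.mem_singleton]
    constructor
    · rintro ⟨hl, hal, hbl⟩
      exact (Submodule.eq_of_le_of_finrank_eq (sup_le hal hbl) (by rw [h2, (hΛ l hl).2])).symm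
    · rintro rfl
      exact ⟨Finset.mem_filter.mpr ⟨Finset.mem_univ _, sup_le (hS a ha).2 (hS b hb).2, h2⟩,
        le_sup_left, le_sup_right⟩
  · intro a ha
    rw [← hF]
    exact card_lines π hπ a (hS a ha).2 Λ hΛ
  · intro l hl
    rw [hss l hl]; exact hle l (hΛ l hl).2
  · intro l hl
    rw [hss l hl]; exact hpos l (by rw [(hΛ l hl).2])
  · intro l hl
    rw [hss l hl]
    by_cases hex : ∃ R : ProjPoint F (3 + 1), R.1 ≤ l ∧ R ∉ V
    · obtain ⟨R, hRl, hRV⟩ := hex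
      obtain ⟨m, hm1, hm2, hm3⟩ := geom_ineq V hcode π l hπ (hΛ l hl).2 (hΛ l hl).1 R hRV hRl
      rw [hF] at hm3
      rw [show secant F 4 V π = q ^ 3 + q ^ 2 + 1 from hsize] at hm3
      exact numeric p h q _ _ hp hh hq hq4 (hcast l (by rw [(hΛ l hl).2]))
        (hpos m (by rw [hm2])) hm3
    · push Not at hex
      right
      have : secant F (3 + 1) V l = q ^ 2 + 1 := by
        rw [secant_eq, ← hcardl l (hΛ l hl).2]
        congr 1
        ext P
        simp only [Finset.mem_filter, Finset.mem_univ, true_and]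
        exact ⟨fun x => x.2, fun x => ⟨hex P x, x⟩⟩
      omega
  · intro l hl l' hl' _ hsl _
    rw [hss l hl] at hsl
    have e1 := Submodule.finrank_sup_add_finrank_inf_eq l l'
    have e2 := Submodule.finrank_mono (sup_le (hΛ l hl).1 (hΛ l' hl').1)
    rw [(hΛ l hl).2, (hΛ l' hl').2] at e1
    rw [hπ] at e2
    have e3 : l ⊓ l' ≠ ⊥ := by
      intro hb
      rw [hb, finrank_bot] at e1
      omega
    obtain ⟨v, hv, hv0⟩ := Submodule.exists_mem_ne_zero_of_ne_bot e3
    have hv' := Submodule.mem_inf.mp hv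
    have x1 : (pt v hv0).1 ≤ l := (pt_le v hv0 l).mpr hv'.1
    have x2 : (pt v hv0).1 ≤ l' := (pt_le v hv0 l').mpr hv'.2
    exact ⟨pt v hv0, Finset.mem_filter.mpr ⟨Finset.mem_univ _, hfullmem l (hΛ l hl).2 hsl _ x1,
      x1.trans (hΛ l hl).1⟩, x1, x2⟩
end

section
/- Let q = p^h > 4 with p prime, h ≥ 1, and let V be a quasi-Hermitian variety of PG(3,q^2) whose characteristic vector v^V belongs to C_p. Then every line of PG(3,q^2) meets V in either 1, q+1, or q^2+1 points, and every point of V lies on at least one line meeting V in exactly q+1 points. -/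
/-!
Common framework: `ProjPoint F n` is the set of points of the projective space
PG(n-1, |F|) (so PG(r, q²) corresponds to `n = r + 1` and `Fintype.card F = q ^ 2`).
Projective subspaces of projective dimension `k` are the submodules of `Fin n → F`
of `finrank` equal to `k + 1`; lines have finrank 2, planes finrank 3 and
hyperplanes finrank `n - 1 = r`.
-/

open Module Matrix

theorem qh_det_dvd {F : Type} [Field F] {n : ℕ}
    (M : Matrix (Fin n) (Fin n) (Polynomial F)) (y : F) (k : ℕ)
    (hk : (M.map (Polynomial.eval y)).rank + k ≤ n) :
    (Polynomial.X - Polynomial.C y) ^ k ∣ M.det := by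
  classical
  set A : Matrix (Fin n) (Fin n) F := M.map (Polynomial.eval y) with hA
  set K := LinearMap.ker A.mulVecLin with hK
  have hdim : k ≤ finrank F K := by
    have h1 := LinearMap.finrank_range_add_finrank_ker A.mulVecLin
    have h2 : A.rank = finrank F (LinearMap.range A.mulVecLin) := rfl
    rw [finrank_fin_fun, ← hK] at h1
    omega
  have hli : LinearIndependent F (fun i : Fin (finrank F K) => (finBasis F K i : Fin n → F)) :=
    (finBasis F K).linearIndependent.map' K.subtype (by simp)
  let e := Basis.sumExtend hli
  have : Fintype (Basis.sumExtendIndex hli) := by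
    have : Finite (Fin (finrank F K) ⊕ Basis.sumExtendIndex hli) := Module.Finite.finite_basis e
    have : Finite (Basis.sumExtendIndex hli) := Finite.sum_right (Fin (finrank F K))
    exact Fintype.ofFinite _
  have hcard : Fintype.card (Fin (finrank F K) ⊕ Basis.sumExtendIndex hli) = Fintype.card (Fin n) := by
    rw [← finrank_eq_card_basis e]; simp
  let s := Fintype.equivOfCardEq hcard
  let b := e.reindex s
  let U : Matrix (Fin n) (Fin n) F := Matrix.of fun i j => b j i
  have hU : U.det ≠ 0 := by
    have h1 : U = (Pi.basisFun F (Fin n)).toMatrix b := by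
      ext i j; simp [U, Basis.toMatrix_apply]
    have h2 := (Pi.basisFun F (Fin n)).isUnit_det b
    rw [Basis.det_apply, ← h1] at h2
    exact h2.ne_zero
  let S : Finset (Fin n) := Finset.univ.filter fun j => A *ᵥ (b j) = 0
  have hS : k ≤ S.card := by
    have : (Finset.univ.image fun i : Fin (finrank F K) => s (Sum.inl i)) ⊆ S := by
      intro j hj
      simp only [Finset.mem_image, Finset.mem_univ, true_and] at hj
      obtain ⟨i, rfl⟩ := hj
      simp only [S, Finset.mem_filter, Finset.mem_univ, true_and]
      have : b (s (Sum.inl i)) = (finBasis F K i : Fin n → F) := by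
        simp [b, e, Basis.sumExtend]
        rfl
      rw [this]
      have h := (finBasis F K i).2
      have h' := LinearMap.mem_ker.1 h
      exact h'
    have h2 := Finset.card_le_card this
    rw [Finset.card_image_of_injective] at h2
    · simp at h2; omega
    · intro i j hij
      simpa using hij
  have hq : ∀ i j, ∃ a : Polynomial F,
      (M * U.map Polynomial.C) i j = (if j ∈ S then Polynomial.X - Polynomial.C y else 1) * a := by
    intro i j
    split_ifs with hj
    · have : (Polynomial.X - Polynomial.C y) ∣ (M * U.map Polynomial.C) i j := by
        rw [Polynomial.dvd_iff_isRoot, Polynomial.IsRoot.def]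
        simp only [S, Finset.mem_filter, Finset.mem_univ, true_and] at hj
        have h3 := congrFun hj i
        simp only [mulVec, dotProduct, Pi.zero_apply] at h3
        rw [Matrix.mul_apply, Polynomial.eval_finsetSum]
        simpa [A, U] using h3
      exact this
    · exact ⟨_, (one_mul _).symm⟩
  choose a ha using hq
  have hdet : M.det * Polynomial.C U.det =
      (∏ j, (if j ∈ S then Polynomial.X - Polynomial.C y else 1)) * (Matrix.of a).det := by
    rw [← Matrix.det_mul_row, RingHom.map_det, ← Matrix.det_mul]
    congr 1
    refine Matrix.ext fun i j => ?_
    exact ha i j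
  rw [Finset.prod_ite, Finset.prod_const_one, mul_one, Finset.prod_const] at hdet
  have hun : IsUnit (Polynomial.C U.det) := Polynomial.isUnit_C.2 (IsUnit.mk0 _ hU)
  rw [← hun.dvd_mul_right, hdet]
  refine dvd_mul_of_dvd_left (pow_dvd_pow _ ?_) _
  simpa using hS

/-- The Hankel determinant argument. -/
theorem qh_hankel {F : Type} [Field F] [Fintype F] [DecidableEq F] (g : F → F → F)
    (hg : ∀ i : ℕ, ∃ s : Polynomial F, s.natDegree ≤ i ∧ ∀ y, s.eval y = ∑ x, x ^ i * g x y)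
    (m : F → ℕ) (hm : ∀ y, m y = (Finset.univ.filter fun x => g x y ≠ 0).card) (y0 : F) :
    ∑ y, (m y0 - m y) ≤ m y0 * (m y0 - 1) := by
  choose s hs1 hs2 using hg
  set n := m y0 with hn
  let H : Matrix (Fin n) (Fin n) (Polynomial F) := Matrix.of fun i j => s (i + j)
  have hdeg : H.det.natDegree ≤ n * (n - 1) := by
    rw [Matrix.det_apply]
    refine Polynomial.natDegree_sum_le_of_forall_le _ _ ?_
    intro t _
    refine (Polynomial.natDegree_smul_le _ _).trans ?_
    refine (Polynomial.natDegree_prod_le _ _).trans ?_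
    refine (Finset.sum_le_sum (fun i _ => hs1 _)).trans ?_
    rw [Finset.sum_add_distrib, Equiv.sum_comp t (fun i : Fin n => (i : ℕ)), Fin.sum_univ_eq_sum_range (fun i => i)]
    have := Finset.sum_range_id_mul_two n
    omega
  have hev : ∀ y, ∀ (e : Fin (m y) → F), Function.Injective e → (∀ i, g (e i) y ≠ 0) →
      H.map (Polynomial.eval y) =
        ((Matrix.of fun (i : Fin n) (j : Fin (m y)) => (e j) ^ (i : ℕ) * g (e j) y)) *
          (Matrix.of fun (j : Fin (m y)) (i : Fin n) => (e j) ^ (i : ℕ)) := by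
    intro y e he hne
    ext i j
    simp only [Matrix.map_apply, H, Matrix.of_apply, Matrix.mul_apply, hs2]
    have himg : Finset.univ.image e = Finset.univ.filter fun x => g x y ≠ 0 := by
      apply Finset.eq_of_subset_of_card_le
      · intro x hx
        simp only [Finset.mem_image, Finset.mem_univ, true_and] at hx
        obtain ⟨i, rfl⟩ := hx
        simp [hne i]
      · rw [Finset.card_image_of_injective _ he, ← hm]; simp
    rw [← Finset.sum_subset (Finset.filter_subset (fun x => g x y ≠ 0) Finset.univ), ← himg,
      Finset.sum_image (fun a _ b _ h => he h)]
    · refine Finset.sum_congr rfl fun x _ => ?_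
      rw [pow_add]; ring
    · intro x _ hx
      simp only [Finset.mem_filter, Finset.mem_univ, true_and, not_not] at hx
      rw [hx, mul_zero]
  have hex : ∀ y, ∃ e : Fin (m y) → F, Function.Injective e ∧ (∀ i, g (e i) y ≠ 0) := by
    intro y
    let f := (Finset.univ.filter fun x => g x y ≠ 0).equivFinOfCardEq (hm y).symm
    refine ⟨fun i => (f.symm i : F), fun i j h => f.symm.injective (Subtype.ext h), fun i => ?_⟩
    have := (f.symm i).2
    exact (Finset.mem_filter.1 this).2
  have hdvd : ∀ y, (Polynomial.X - Polynomial.C y) ^ (n - m y) ∣ H.det := by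
    intro y
    by_cases hy : m y ≤ n
    · apply qh_det_dvd
      obtain ⟨e, he1, he2⟩ := hex y
      rw [hev y e he1 he2]
      have h1 := Matrix.rank_mul_le_left (Matrix.of fun (i : Fin n) (j : Fin (m y)) => (e j) ^ (i : ℕ) * g (e j) y)
          (Matrix.of fun (j : Fin (m y)) (i : Fin n) => (e j) ^ (i : ℕ))
      have h2 := Matrix.rank_le_width (Matrix.of fun (i : Fin n) (j : Fin (m y)) => (e j) ^ (i : ℕ) * g (e j) y)
      omega
    · rw [Nat.sub_eq_zero_of_le (by omega)]; simp
  have hne : H.det ≠ 0 := by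
    obtain ⟨e, he1, he2⟩ := hex y0
    intro h0
    have h1 : (H.map (Polynomial.eval y0)).det = 0 := by
      have := RingHom.map_det (Polynomial.evalRingHom y0) H
      rw [h0, map_zero] at this
      exact this.symm
    rw [hev y0 e he1 he2] at h1
    have hV : (Matrix.of fun (j : Fin n) (i : Fin n) => (e j) ^ (i : ℕ)) = Matrix.vandermonde e := by
      ext i j; simp [Matrix.vandermonde]
    have hW : (Matrix.of fun (i : Fin n) (j : Fin n) => (e j) ^ (i : ℕ) * g (e j) y0) =
      Matrix.of fun i j => (fun j => g (e j) y0) j * (Matrix.vandermonde e)ᵀ i j := by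
      ext i j; simp [Matrix.vandermonde, mul_comm]
    rw [Matrix.det_mul] at h1
    erw [hV, hW] at h1
    rw [Matrix.det_mul_row, Matrix.det_transpose] at h1
    have hv := Matrix.det_vandermonde_ne_zero_iff.2 he1
    have hp : ∏ i, g (e i) y0 ≠ 0 := Finset.prod_ne_zero_iff.2 fun i _ => he2 i
    exact mul_ne_zero (mul_ne_zero hp hv) hv h1
  have hprod : ∏ y : F, (Polynomial.X - Polynomial.C y) ^ (n - m y) ∣ H.det := by
    apply Finset.prod_dvd_of_coprime
    · intro a _ b _ hab
      exact IsCoprime.pow (Polynomial.pairwise_coprime_X_sub_C (s := fun x : F => x) (fun _ _ h => h) hab)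
    · intro y _; exact hdvd y
  have h3 := Polynomial.natDegree_le_of_dvd hprod hne
  rw [Polynomial.natDegree_prod_of_monic] at h3
  · simp only [Polynomial.natDegree_pow, Polynomial.natDegree_X_sub_C, mul_one] at h3
    exact h3.trans hdeg
  · intro y _; exact (Polynomial.monic_X_sub_C y).pow _

/-- Number of points of `S` in the subspace `W`. -/
noncomputable def qhCnt {F : Type} [Field F] {n : ℕ} (S : Set (ProjPoint F n))
    (W : Submodule F (Fin n → F)) : ℕ := secant F n S W

/-- The subspaces between `U` and `W` of dimension one more than `U`. -/
def qhMidSet {F : Type} [Field F] {n : ℕ} (U W : Submodule F (Fin n → F)) :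
    Set (Submodule F (Fin n → F)) :=
  {X | U ≤ X ∧ X ≤ W ∧ finrank F X = finrank F U + 1}

theorem qh_finite_pts (F : Type) [Field F] [Finite F] (n : ℕ) : Finite (ProjPoint F n) := by
  unfold ProjPoint
  infer_instance

/-- The subspaces between `U` and `W` of dimension one more than `U`, as a finset. -/
noncomputable def qhMid {F : Type} [Field F] [Finite F] {n : ℕ} (U W : Submodule F (Fin n → F)) :
    Finset (Submodule F (Fin n → F)) :=
  (Set.toFinite (qhMidSet U W)).toFinset

theorem mem_qhMid {F : Type} [Field F] [Finite F] {n : ℕ} {U W X : Submodule F (Fin n → F)} :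
    X ∈ qhMid U W ↔ U ≤ X ∧ X ≤ W ∧ finrank F X = finrank F U + 1 := by
  simp [qhMid, qhMidSet]

theorem qh_sup_finrank {F : Type} [Field F] {n : ℕ} (U : Submodule F (Fin n → F))
    (v : Fin n → F) (hv : v ∉ U) :
    finrank F (U ⊔ Submodule.span F {v} : Submodule F (Fin n → F)) = finrank F U + 1 := by
  have hv0 : v ≠ 0 := fun h => hv (h ▸ U.zero_mem)
  have h1 := Submodule.finrank_sup_add_finrank_inf_eq U (Submodule.span F {v})
  rw [finrank_span_singleton hv0] at h1
  have h2 : U ⊓ Submodule.span F {v} = ⊥ := by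
    rw [eq_bot_iff]
    intro w hw
    obtain ⟨hw1, hw2⟩ := hw
    obtain ⟨a, rfl⟩ := Submodule.mem_span_singleton.1 hw2
    by_cases ha : a = 0
    · simp [ha]
    · exact absurd ((U.smul_mem_iff ha).1 hw1) hv
  rw [h2] at h1
  simpa using h1

/-- Parametrization of the pencil. -/
theorem qh_mid_sum {F : Type} [Field F] [Fintype F] {n : ℕ} {G : Type} [AddCommMonoid G]
    (U : Submodule F (Fin n → F)) (a b : Fin n → F)
    (hb : b ∉ U) (ha : a ∉ U ⊔ Submodule.span F {b})
    (f : Submodule F (Fin n → F) → G) :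
    ∑ X ∈ qhMid U (U ⊔ Submodule.span F {b} ⊔ Submodule.span F {a}), f X =
      ∑ y : F, f (U ⊔ Submodule.span F {a + y • b}) + f (U ⊔ Submodule.span F {b}) := by
  classical
  have hay : ∀ y : F, a + y • b ∉ U ⊔ Submodule.span F {b} := by
    intro y hy
    apply ha
    have hbm : b ∈ U ⊔ Submodule.span F {b} :=
      Submodule.mem_sup_right (Submodule.mem_span_singleton_self b)
    have := Submodule.sub_mem _ hy (Submodule.smul_mem _ y hbm)
    simpa using this
  have hayU : ∀ y : F, a + y • b ∉ U := fun y hy => hay y (Submodule.mem_sup_left hy)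
  set g : Option F → Submodule F (Fin n → F) := fun o =>
    o.elim (U ⊔ Submodule.span F {b}) (fun y => U ⊔ Submodule.span F {a + y • b}) with hg
  have hinj : Function.Injective g := by
    have hne : ∀ y : F, U ⊔ Submodule.span F {a + y • b} ≠ U ⊔ Submodule.span F {b} := by
      intro y h
      apply hay y
      rw [← h]
      exact Submodule.mem_sup_right (Submodule.mem_span_singleton_self _)
    rintro (_ | y) (_ | z) h
    · rfl
    · exact absurd h.symm (hne z)
    · exact absurd h (hne y)
    · by_contra hyz
      have hyz' : y - z ≠ 0 := fun h => hyz (by rw [sub_eq_zero.1 h])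
      have h' : U ⊔ Submodule.span F {a + y • b} = U ⊔ Submodule.span F {a + z • b} := h
      have h1 : a + y • b ∈ U ⊔ Submodule.span F {a + y • b} :=
        Submodule.mem_sup_right (Submodule.mem_span_singleton_self _)
      have h2 : a + z • b ∈ U ⊔ Submodule.span F {a + y • b} := by
        rw [h']; exact Submodule.mem_sup_right (Submodule.mem_span_singleton_self _)
      have h3 : b ∈ U ⊔ Submodule.span F {a + y • b} := by
        have := Submodule.sub_mem _ h1 h2
        rw [add_sub_add_left_eq_sub, ← sub_smul] at this
        exact (Submodule.smul_mem_iff _ hyz').1 this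
      have h4 : U ⊔ Submodule.span F {b} = U ⊔ Submodule.span F {a + y • b} := by
        apply Submodule.eq_of_le_of_finrank_eq
        · refine sup_le le_sup_left ?_
          rw [Submodule.span_singleton_le_iff_mem]; exact h3
        · rw [qh_sup_finrank _ _ hb, qh_sup_finrank _ _ (hayU y)]
      exact hne y h4.symm
  have himg : qhMid U (U ⊔ Submodule.span F {b} ⊔ Submodule.span F {a}) = Finset.univ.image g := by
    ext X
    rw [mem_qhMid]
    simp only [Finset.mem_image, Finset.mem_univ, true_and]
    constructor
    · rintro ⟨h1, h2, h3⟩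
      have hlt : ∃ v ∈ X, v ∉ U := by
        by_contra hcon
        push Not at hcon
        have : X = U := le_antisymm hcon h1
        rw [this] at h3; omega
      obtain ⟨v, hvX, hvU⟩ := hlt
      obtain ⟨w, hw, z, hz, hwz⟩ := Submodule.mem_sup.1 (h2 hvX)
      obtain ⟨u, hu, b', hb', rfl⟩ := Submodule.mem_sup.1 hw
      obtain ⟨β, rfl⟩ := Submodule.mem_span_singleton.1 hb'
      obtain ⟨α, rfl⟩ := Submodule.mem_span_singleton.1 hz
      have hvX' : β • b + α • a ∈ X := by
        have := X.sub_mem hvX (h1 hu)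
        rw [← hwz] at this
        convert this using 1
        abel
      by_cases hα : α = 0
      · refine ⟨none, ?_⟩
        have hβ : β ≠ 0 := by
          rintro rfl
          apply hvU
          rw [← hwz, hα]; simpa using hu
        apply Submodule.eq_of_le_of_finrank_eq
        · refine sup_le h1 ?_
          rw [Submodule.span_singleton_le_iff_mem]
          rw [hα, zero_smul, add_zero] at hvX'
          exact (X.smul_mem_iff hβ).1 hvX'
        · rw [h3]; exact qh_sup_finrank _ _ hb
      · refine ⟨some (α⁻¹ * β), ?_⟩
        apply Submodule.eq_of_le_of_finrank_eq
        · refine sup_le h1 ?_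
          rw [Submodule.span_singleton_le_iff_mem]
          have := X.smul_mem α⁻¹ hvX'
          rw [smul_add, smul_smul, smul_smul, inv_mul_cancel₀ hα, one_smul, add_comm] at this
          exact this
        · rw [h3]; exact qh_sup_finrank _ _ (hayU _)
    · rintro ⟨o, rfl⟩
      rcases o with _ | y
      · exact ⟨le_sup_left, le_sup_left, qh_sup_finrank _ _ hb⟩
      · refine ⟨le_sup_left, ?_, qh_sup_finrank _ _ (hayU y)⟩
        refine sup_le (le_sup_left.trans le_sup_left) ?_
        rw [Submodule.span_singleton_le_iff_mem]
        refine Submodule.add_mem _ ?_ (Submodule.smul_mem _ _ ?_)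
        · exact Submodule.mem_sup_right (Submodule.mem_span_singleton_self _)
        · exact Submodule.mem_sup_left (Submodule.mem_sup_right (Submodule.mem_span_singleton_self _))
  rw [himg, Finset.sum_image (fun x _ y _ h => hinj h), Fintype.sum_option, add_comm]
  rfl

/-- Existence of a complement vector. -/
theorem qh_exists_ext {F : Type} [Field F] {n : ℕ} (U W : Submodule F (Fin n → F))
    (hUW : U ≤ W) (h : finrank F W = finrank F U + 1) :
    ∃ a, a ∉ U ∧ W = U ⊔ Submodule.span F {a} := by
  have : ∃ v ∈ W, v ∉ U := by
    by_contra hcon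
    push Not at hcon
    have : W = U := le_antisymm hcon hUW
    rw [this] at h; omega
  obtain ⟨v, hv, hvU⟩ := this
  refine ⟨v, hvU, (Submodule.eq_of_le_of_finrank_eq ?_ ?_).symm⟩
  · refine sup_le hUW ?_
    rw [Submodule.span_singleton_le_iff_mem]; exact hv
  · rw [qh_sup_finrank _ _ hvU, h]

theorem qh_exists_mid {F : Type} [Field F] {n : ℕ} (U W : Submodule F (Fin n → F))
    (hUW : U ≤ W) (h : finrank F U < finrank F W) :
    ∃ b, b ∉ U ∧ U ⊔ Submodule.span F {b} ≤ W := by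
  have : ∃ v ∈ W, v ∉ U := by
    by_contra hcon
    push Not at hcon
    have : W = U := le_antisymm hcon hUW
    rw [this] at h; omega
  obtain ⟨v, hv, hvU⟩ := this
  refine ⟨v, hvU, ?_⟩
  refine sup_le hUW ?_
  rw [Submodule.span_singleton_le_iff_mem]; exact hv

theorem qh_mid_card {F : Type} [Field F] [Fintype F] {n : ℕ} (U W : Submodule F (Fin n → F))
    (hUW : U ≤ W) (h : finrank F W = finrank F U + 2) :
    (qhMid U W).card = Fintype.card F + 1 := by
  obtain ⟨b, hb, hbW⟩ := qh_exists_mid U W hUW (by omega)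
  obtain ⟨a, ha, rfl⟩ := qh_exists_ext _ W hbW (by rw [qh_sup_finrank _ _ hb, h])
  rw [Finset.card_eq_sum_ones, qh_mid_sum U a b hb ha]
  simp

/-- the points off `U` in `W` are partitioned by the pencil. -/
theorem qh_partition {F : Type} [Field F] [Fintype F] {n : ℕ} (S : Set (ProjPoint F n))
    (U W : Submodule F (Fin n → F)) (hUW : U ≤ W) :
    ∑ X ∈ qhMid U W, ((qhCnt S X : ℤ) - qhCnt S U) = qhCnt S W - qhCnt S U := by
  classical
  have := qh_finite_pts F n
  let _ : Fintype (ProjPoint F n) := Fintype.ofFinite _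
  let T : Submodule F (Fin n → F) → Finset (ProjPoint F n) := fun W =>
    Finset.univ.filter fun P => P ∈ S ∧ P.1 ≤ W
  have hT : ∀ W, qhCnt S W = (T W).card := by
    intro W
    have : S ∩ pointsIn F n W = ↑(T W) := by
      ext P
      simp only [T, pointsIn, Finset.coe_filter, Finset.mem_univ, true_and]
      rfl
    rw [qhCnt, secant, this, Set.ncard_coe_finset]
  have hsub : ∀ X, U ≤ X → ((T X \ T U).card : ℤ) = qhCnt S X - qhCnt S U := by
    intro X hX
    have hss : T U ⊆ T X := by
      intro P hP
      simp only [T, Finset.mem_filter, Finset.mem_univ, true_and] at hP ⊢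
      exact ⟨hP.1, hP.2.trans hX⟩
    rw [Finset.card_sdiff_of_subset hss, Nat.cast_sub (Finset.card_le_card hss), hT, hT]
  rw [← hsub W hUW, Finset.sum_congr rfl (fun X hX => (hsub X (mem_qhMid.1 hX).1).symm)]
  rw [← Nat.cast_sum]
  congr 1
  rw [← Finset.card_biUnion]
  · congr 1
    ext P
    simp only [Finset.mem_biUnion, mem_qhMid, Finset.mem_sdiff, T, Finset.mem_filter, Finset.mem_univ, true_and]
    constructor
    · rintro ⟨X, ⟨h1, h2, h3⟩, ⟨h4, h5⟩, h6⟩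
      exact ⟨⟨h4, h5.trans h2⟩, h6⟩
    · rintro ⟨⟨h1, h2⟩, h3⟩
      have hPU : ¬ P.1 ≤ U := fun h => h3 ⟨h1, h⟩
      have hP := P.2
      obtain ⟨v, hv0, hv⟩ := finrank_eq_one_iff'.1 hP
      have hPs : P.1 = Submodule.span F {(v : Fin n → F)} := by
        apply le_antisymm
        · intro w hw
          obtain ⟨c, hc⟩ := hv ⟨w, hw⟩
          rw [Submodule.mem_span_singleton]
          exact ⟨c, congrArg Subtype.val hc⟩
        · rw [Submodule.span_singleton_le_iff_mem]; exact v.2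
      have hvU : (v : Fin n → F) ∉ U := by
        intro h; apply hPU; rw [hPs, Submodule.span_singleton_le_iff_mem]; exact h
      refine ⟨U ⊔ P.1, ⟨le_sup_left, sup_le hUW h2, ?_⟩, ⟨h1, le_sup_right⟩, h3⟩
      rw [hPs]; exact qh_sup_finrank _ _ hvU
  · intro X hX Y hY hXY
    rw [Function.onFun, Finset.disjoint_left]
    intro P hPX hPY
    apply hXY
    rw [Finset.mem_coe, mem_qhMid] at hX hY
    simp only [Finset.mem_sdiff, T, Finset.mem_filter, Finset.mem_univ, true_and] at hPX hPY
    have hPU : ¬ P.1 ≤ U := fun h => hPX.2 ⟨hPX.1.1, h⟩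
    have hlt : U < U ⊔ P.1 := lt_of_le_of_ne le_sup_left (fun h => hPU (h ▸ le_sup_right))
    have hr := Submodule.finrank_lt_finrank_of_lt hlt
    have key : ∀ Z, U ≤ Z → finrank F Z = finrank F U + 1 → P.1 ≤ Z → U ⊔ P.1 = Z := by
      intro Z h1 h2 h3
      apply Submodule.eq_of_le_of_finrank_le (sup_le h1 h3)
      omega
    rw [← key X hX.1 hX.2.2 hPX.1.2, ← key Y hY.1 hY.2.2 hPY.1.2]

/-- The point spanned by a nonzero vector. -/
def qhPt {F : Type} [Field F] {n : ℕ} (v : Fin n → F) (hv : v ≠ 0) : ProjPoint F n :=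
  ⟨Submodule.span F {v}, finrank_span_singleton hv⟩

theorem qh_code_poly {F : Type} [Field F] [Fintype F] (p : ℕ) [CharP F p]
    (c : ProjPoint F (3 + 1) → ZMod p) (hc : c ∈ hypCode F p (3 + 1))
    (P A B : Fin (3 + 1) → F) (hne : ∀ x y : F, A + y • B + x • P ≠ 0) (i : ℕ) :
    ∃ s : Polynomial F, s.natDegree ≤ i ∧ ∀ y, s.eval y =
      ∑ x, x ^ i * ZMod.castHom (dvd_refl p) F (c (qhPt (A + y • B + x • P) (hne x y))) := by
  classical
  unfold hypCode at hc
  induction hc using Submodule.span_induction with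
  | zero => exact ⟨0, by simp, by simp⟩
  | add c d _ _ h1 h2 =>
    obtain ⟨s, hs1, hs2⟩ := h1
    obtain ⟨t, ht1, ht2⟩ := h2
    refine ⟨s + t, (Polynomial.natDegree_add_le _ _).trans (max_le hs1 ht1), fun y => ?_⟩
    rw [Polynomial.eval_add, hs2, ht2, ← Finset.sum_add_distrib]
    refine Finset.sum_congr rfl fun x _ => ?_
    rw [Pi.add_apply, map_add, mul_add]
  | smul a c _ h1 =>
    obtain ⟨s, hs1, hs2⟩ := h1
    refine ⟨Polynomial.C (ZMod.castHom (dvd_refl p) F a) * s,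
      (Polynomial.natDegree_C_mul_le _ _).trans hs1, fun y => ?_⟩
    rw [Polynomial.eval_mul, Polynomial.eval_C, hs2, Finset.mul_sum]
    refine Finset.sum_congr rfl fun x _ => ?_
    rw [Pi.smul_apply, smul_eq_mul, map_mul]; ring
  | mem c hc =>
    obtain ⟨H, hH, rfl⟩ := hc
    have hHlt : H < ⊤ := by
      rw [lt_top_iff_ne_top]
      rintro rfl
      rw [finrank_top, finrank_fin_fun] at hH
      omega
    obtain ⟨l, hl0, hl⟩ := Submodule.exists_le_ker_of_lt_top H hHlt
    have hker : H = LinearMap.ker l := by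
      apply Submodule.eq_of_le_of_finrank_le hl
      have h1 := LinearMap.finrank_range_add_finrank_ker l
      have h2 : 0 < finrank F (LinearMap.range l) := by
        rw [Module.finrank_pos_iff, Submodule.nontrivial_iff_ne_bot]
        intro h; exact hl0 (LinearMap.range_eq_bot.1 h)
      rw [finrank_fin_fun] at h1
      omega
    have hval : ∀ x y : F, ZMod.castHom (dvd_refl p) F
        (charVec F p (3 + 1) (pointsIn F (3 + 1) H) (qhPt (A + y • B + x • P) (hne x y))) =
        if l A + y * l B + x * l P = 0 then 1 else 0 := by
      intro x y
      have hiff : qhPt (A + y • B + x • P) (hne x y) ∈ pointsIn F (3 + 1) H ↔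
          l A + y * l B + x * l P = 0 := by
        change Submodule.span F {A + y • B + x • P} ≤ H ↔ _
        rw [Submodule.span_singleton_le_iff_mem, hker, LinearMap.mem_ker]
        simp
      rw [charVec]
      by_cases h : l A + y * l B + x * l P = 0
      · rw [if_pos h, Set.indicator_of_mem (hiff.2 h), Pi.one_apply, map_one]
      · rw [if_neg h, Set.indicator_of_notMem (fun h' => h (hiff.1 h')), map_zero]
    simp only [hval]
    generalize l A = a
    generalize l B = b
    generalize l P = e
    have hlin : ∀ r s : F, (Polynomial.C r + Polynomial.C s * Polynomial.X).natDegree ≤ 1 := by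
      intro r s
      rw [add_comm]
      exact Polynomial.natDegree_linear_le
    by_cases he : e = 0
    · subst he
      by_cases hi : i < Fintype.card F - 1
      · refine ⟨0, by simp, fun y => ?_⟩
        simp only [mul_zero, add_zero]
        rw [← Finset.sum_mul, FiniteField.sum_pow_lt_card_sub_one F i hi]; simp
      · refine ⟨Polynomial.C (∑ x : F, x ^ i) *
          (1 - (Polynomial.C a + Polynomial.C b * Polynomial.X) ^ (Fintype.card F - 1)), ?_, fun y => ?_⟩
        · refine (Polynomial.natDegree_C_mul_le _ _).trans ?_
          refine (Polynomial.natDegree_sub_le _ _).trans ?_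
          refine max_le (by simp) ?_
          refine Polynomial.natDegree_pow_le.trans ?_
          have := Nat.mul_le_mul_left (Fintype.card F - 1) (hlin a b)
          omega
        · simp only [mul_zero, add_zero]
          rw [← Finset.sum_mul]
          simp only [Polynomial.eval_mul, Polynomial.eval_C, Polynomial.eval_sub, Polynomial.eval_one,
            Polynomial.eval_pow, Polynomial.eval_add, Polynomial.eval_X]
          congr 1
          have hQ := Fintype.one_lt_card (α := F)
          split_ifs with h
          · rw [mul_comm b y, h, zero_pow (by omega), sub_zero]
          · rw [mul_comm b y, FiniteField.pow_card_sub_one_eq_one _ h, sub_self]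
    · refine ⟨(Polynomial.C (-a / e) + Polynomial.C (-b / e) * Polynomial.X) ^ i, ?_, fun y => ?_⟩
      · refine Polynomial.natDegree_pow_le.trans ?_
        have := Nat.mul_le_mul_left i (hlin (-a / e) (-b / e))
        omega
      · rw [Finset.sum_eq_single (-(a + y * b) / e)]
        · rw [if_pos (by field_simp; ring)]
          simp only [Polynomial.eval_mul, Polynomial.eval_C,
            Polynomial.eval_pow, Polynomial.eval_add, Polynomial.eval_X]
          rw [mul_one]
          congr 1
          ring
        · intro x _ hx
          rw [if_neg, mul_zero]
          intro h
          apply hx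
          field_simp
          linear_combination h
        · simp

theorem qh_cnt_bot {F : Type} [Field F] {n : ℕ} (V : Set (ProjPoint F n)) :
    qhCnt V (⊥ : Submodule F (Fin n → F)) = 0 := by
  have : V ∩ pointsIn F n ⊥ = ∅ := by
    ext P
    simp only [Set.mem_inter_iff, Set.mem_empty_iff_false, iff_false, not_and]
    intro _ h
    have h' : P.1 ≤ ⊥ := h
    have := P.2
    rw [le_bot_iff.1 h'] at this
    simp at this
  rw [qhCnt, secant, this, Set.ncard_empty]

open Classical in
theorem qh_cnt_pt {F : Type} [Field F] {n : ℕ} (V : Set (ProjPoint F n)) (P : ProjPoint F n) :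
    qhCnt V P.1 = if P ∈ V then 1 else 0 := by
  have : V ∩ pointsIn F n P.1 = if P ∈ V then {P} else ∅ := by
    ext R
    have hR : R ∈ pointsIn F n P.1 ↔ R = P := by
      constructor
      · intro h
        exact Subtype.ext (Submodule.eq_of_le_of_finrank_eq h (by rw [R.2, P.2]))
      · rintro rfl; exact le_refl R.1
    rw [Set.mem_inter_iff, hR]
    split_ifs with h
    · rw [Set.mem_singleton_iff]
      exact ⟨fun h => h.2, fun h' => ⟨h' ▸ h, h'⟩⟩
    · simp only [Set.mem_empty_iff_false, iff_false, not_and]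
      rintro h1 rfl
      exact h h1
  rw [qhCnt, secant, this]
  split_ifs <;> simp

open Classical in
theorem qh_line_cnt {F : Type} [Field F] [Fintype F] {n : ℕ} (V : Set (ProjPoint F n))
    (u v : Fin n → F) (hu : u ≠ 0) (hv : v ∉ Submodule.span F {u}) (huV : qhPt u hu ∉ V)
    (hne : ∀ x : F, v + x • u ≠ 0) :
    qhCnt V (Submodule.span F {u} ⊔ Submodule.span F {v}) =
      (Finset.univ.filter fun x : F => qhPt (v + x • u) (hne x) ∈ V).card := by
  have h1 := qh_partition V ⊥ (⊥ ⊔ Submodule.span F {u} ⊔ Submodule.span F {v}) bot_le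
  rw [qh_mid_sum ⊥ v u (by simpa using hu) (by simpa using hv)] at h1
  simp only [qh_cnt_bot, bot_sup_eq, Nat.cast_zero, sub_zero] at h1
  have h2 := qh_cnt_pt V (qhPt u hu)
  rw [if_neg huV] at h2
  have h2' : qhCnt V (Submodule.span F {u}) = 0 := h2
  rw [h2'] at h1
  have h3 : ∀ x : F, qhCnt V (Submodule.span F {v + x • u}) =
      if qhPt (v + x • u) (hne x) ∈ V then 1 else 0 := fun x => qh_cnt_pt V (qhPt (v + x • u) (hne x))
  simp only [h3] at h1
  rw [Finset.card_filter]
  push_cast at h1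
  zify
  rw [← h1]
  simp

theorem qh_pencil {F : Type} [Field F] [Fintype F] (p : ℕ) (hp : p.Prime) [CharP F p]
    (V : Set (ProjPoint F (3 + 1)))
    (hcode : charVec F p (3 + 1) V ∈ hypCode F p (3 + 1))
    (u a b : Fin (3 + 1) → F) (hu : u ≠ 0) (huV : qhPt u hu ∉ V)
    (hb : b ∉ Submodule.span F {u}) (ha : a ∉ Submodule.span F {u} ⊔ Submodule.span F {b}) :
    (∀ y0 : F, ∑ y : F, (qhCnt V (Submodule.span F {u} ⊔ Submodule.span F {a + y0 • b}) -
        qhCnt V (Submodule.span F {u} ⊔ Submodule.span F {a + y • b})) ≤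
      qhCnt V (Submodule.span F {u} ⊔ Submodule.span F {a + y0 • b}) *
      (qhCnt V (Submodule.span F {u} ⊔ Submodule.span F {a + y0 • b}) - 1)) ∧
    p ∣ ∑ y : F, qhCnt V (Submodule.span F {u} ⊔ Submodule.span F {a + y • b}) := by
  classical
  have : Fact p.Prime := ⟨hp⟩
  have hay : ∀ y : F, a + y • b ∉ Submodule.span F {u} := by
    intro y hy
    apply ha
    have hbm : b ∈ Submodule.span F {u} ⊔ Submodule.span F {b} :=
      Submodule.mem_sup_right (Submodule.mem_span_singleton_self b)
    have := Submodule.sub_mem _ (Submodule.mem_sup_left hy) (Submodule.smul_mem _ y hbm)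
    simpa using this
  have hne : ∀ x y : F, a + y • b + x • u ≠ 0 := by
    intro x y h
    apply hay y
    rw [eq_neg_of_add_eq_zero_left h]
    exact Submodule.neg_mem _ (Submodule.smul_mem _ _ (Submodule.mem_span_singleton_self u))
  have hcnt : ∀ y : F, qhCnt V (Submodule.span F {u} ⊔ Submodule.span F {a + y • b}) =
      (Finset.univ.filter fun x : F => qhPt (a + y • b + x • u) (hne x y) ∈ V).card :=
    fun y => qh_line_cnt V u (a + y • b) hu (hay y) huV (fun x => hne x y)
  set g : F → F → F := fun x y => ZMod.castHom (dvd_refl p) F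
    (charVec F p (3 + 1) V (qhPt (a + y • b + x • u) (hne x y))) with hgdef
  have hgv : ∀ x y, g x y = if qhPt (a + y • b + x • u) (hne x y) ∈ V then 1 else 0 := by
    intro x y
    simp only [hgdef, charVec]
    split_ifs with h
    · rw [Set.indicator_of_mem h, Pi.one_apply, map_one]
    · rw [Set.indicator_of_notMem h, map_zero]
  have hg := qh_code_poly p _ hcode u a b hne
  constructor
  · intro y0
    refine qh_hankel g hg (fun y => qhCnt V (Submodule.span F {u} ⊔ Submodule.span F {a + y • b}))
      (fun y => ?_) y0
    rw [hcnt y]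
    congr 1
    ext x
    simp [hgv]
  · obtain ⟨s, hs1, hs2⟩ := hg 0
    have h1 : ∀ y, (qhCnt V (Submodule.span F {u} ⊔ Submodule.span F {a + y • b}) : F) = s.eval y := by
      intro y
      rw [hs2 y, hcnt y, Finset.card_filter]
      push_cast
      refine Finset.sum_congr rfl fun x _ => ?_
      have := hgv x y
      simp only [hgdef] at this
      rw [this]; simp
    rw [← CharP.cast_eq_zero_iff F p]
    push_cast
    rw [Polynomial.eq_C_of_natDegree_le_zero hs1] at h1
    simp only [h1, Polynomial.eval_C, Finset.sum_const, Finset.card_univ, nsmul_eq_mul]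
    rw [FiniteField.cast_card_eq_zero, zero_mul]

/-- The points of `S` in `W`, as a finset. -/
noncomputable def qhPts {F : Type} [Field F] [Finite F] {n : ℕ} (S : Set (ProjPoint F n))
    (W : Submodule F (Fin n → F)) : Finset (ProjPoint F n) :=
  have := qh_finite_pts F n
  (Set.toFinite (S ∩ pointsIn F n W)).toFinset

theorem mem_qhPts {F : Type} [Field F] [Finite F] {n : ℕ} {S : Set (ProjPoint F n)}
    {W : Submodule F (Fin n → F)} {P : ProjPoint F n} :
    P ∈ qhPts S W ↔ P ∈ S ∧ P.1 ≤ W := by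
  simp [qhPts, pointsIn]

theorem qh_pts_card {F : Type} [Field F] [Finite F] {n : ℕ} (S : Set (ProjPoint F n))
    (W : Submodule F (Fin n → F)) : (qhPts S W).card = qhCnt S W := by
  have := qh_finite_pts F n
  unfold qhPts qhCnt secant
  rw [Set.ncard_eq_toFinset_card _ (Set.toFinite _)]

theorem qh_pt_univ {F : Type} [Field F] {n : ℕ} (P : ProjPoint F n) :
    qhCnt Set.univ P.1 = 1 := by
  rw [qh_cnt_pt]; simp

theorem qh_line_pts {F : Type} [Field F] [Fintype F] {n : ℕ} (W : Submodule F (Fin n → F))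
    (h : finrank F W = 2) : qhCnt Set.univ W = Fintype.card F + 1 := by
  have h1 := qh_partition Set.univ ⊥ W bot_le
  have h2 := qh_mid_card ⊥ W bot_le (by simpa using h)
  rw [Finset.sum_congr rfl (g := fun _ => (1 : ℤ))] at h1
  · rw [Finset.sum_const, h2, qh_cnt_bot] at h1
    simp at h1
    exact_mod_cast h1.symm
  · intro X hX
    rw [mem_qhMid] at hX
    have hX1 : finrank F X = 1 := by simpa using hX.2.2
    have := qh_pt_univ (⟨X, hX1⟩ : ProjPoint F n)
    rw [qh_cnt_bot]
    simp only at this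
    rw [this]; simp

theorem qh_cnt_le {F : Type} [Field F] [Finite F] {n : ℕ} (V : Set (ProjPoint F n))
    (W : Submodule F (Fin n → F)) : qhCnt V W ≤ qhCnt Set.univ W := by
  rw [← qh_pts_card, ← qh_pts_card]
  apply Finset.card_le_card
  intro P
  simp only [mem_qhPts]
  exact fun h => ⟨trivial, h.2⟩

/-- A line with fewer than the maximal number of points contains a point off `V`. -/
theorem qh_exists_off {F : Type} [Field F] [Fintype F] {n : ℕ} (V : Set (ProjPoint F n))
    (W : Submodule F (Fin n → F)) (h : finrank F W = 2) (hW : qhCnt V W < Fintype.card F + 1) :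
    ∃ P : ProjPoint F n, P ∉ V ∧ P.1 ≤ W := by
  by_contra hcon
  push Not at hcon
  rw [← qh_line_pts W h, ← qh_pts_card, ← qh_pts_card] at hW
  apply absurd hW
  rw [not_lt]
  apply Finset.card_le_card
  intro P
  simp only [mem_qhPts]
  intro hP
  by_cases hPV : P ∈ V
  · exact ⟨hPV, hP.2⟩
  · exact absurd hP.2 (hcon P hPV)

theorem qh_pt_span {F : Type} [Field F] {n : ℕ} (P : ProjPoint F n) :
    ∃ u, ∃ hu : u ≠ 0, P = qhPt u hu := by
  obtain ⟨u, hu, h⟩ := qh_exists_ext ⊥ P.1 bot_le (by simpa using P.2)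
  refine ⟨u, by simpa using hu, ?_⟩
  apply Subtype.ext
  simpa [qhPt] using h

theorem qh_line_unique {F : Type} [Field F] {n : ℕ} (P R : ProjPoint F n) (hPR : P ≠ R)
    (W X : Submodule F (Fin n → F)) (hW : finrank F W = 2) (hX : finrank F X = 2)
    (h1 : P.1 ≤ W) (h2 : R.1 ≤ W) (h3 : P.1 ≤ X) (h4 : R.1 ≤ X) : W = X := by
  obtain ⟨u, hu, rfl⟩ := qh_pt_span P
  obtain ⟨v, hv, rfl⟩ := qh_pt_span R
  have hvu : v ∉ Submodule.span F {u} := by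
    intro hvu
    apply hPR
    apply Subtype.ext
    symm
    apply Submodule.eq_of_le_of_finrank_eq
    · simpa [qhPt] using hvu
    · exact (qhPt v hv).2.trans (qhPt u hu).2.symm
  have h := qh_sup_finrank _ v hvu
  rw [finrank_span_singleton hu] at h
  have e1 := Submodule.eq_of_le_of_finrank_eq (sup_le h1 h2) (h.trans hW.symm)
  have e2 := Submodule.eq_of_le_of_finrank_eq (sup_le h3 h4) (h.trans hX.symm)
  exact e1.symm.trans e2

/-- Double counting of incident (point of `S`, line) pairs. -/
theorem qh_dc {F : Type} [Field F] [Fintype F] {n : ℕ} (S : Set (ProjPoint F n))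
    (π : Submodule F (Fin n → F)) (L : Finset (Submodule F (Fin n → F)))
    (hL : ∀ l ∈ L, l ≤ π) (f : Submodule F (Fin n → F) → ℤ) :
    ∑ l ∈ L, f l * qhCnt S l =
      ∑ R ∈ qhPts S π, ∑ l ∈ (open Classical in L.filter fun l => R.1 ≤ l), f l := by
  classical
  have h : ∀ l ∈ L, f l * qhCnt S l = ∑ R ∈ qhPts S l, f l := by
    intro l _
    rw [Finset.sum_const, qh_pts_card, nsmul_eq_mul, mul_comm]
  rw [Finset.sum_congr rfl h]
  apply Finset.sum_comm'
  intro l R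
  simp only [mem_qhPts, Finset.mem_filter]
  constructor
  · rintro ⟨h1, h2, h3⟩
    exact ⟨⟨h1, h3⟩, h2, h3.trans (hL l h1)⟩
  · rintro ⟨⟨h1, h2⟩, h3, h4⟩
    exact ⟨h1, h3, h2⟩

/-- The lines of a subspace. -/
noncomputable def qhLines {F : Type} [Field F] [Finite F] {n : ℕ} (π : Submodule F (Fin n → F)) :
    Finset (Submodule F (Fin n → F)) :=
  (Set.toFinite {l : Submodule F (Fin n → F) | l ≤ π ∧ finrank F l = 2}).toFinset

theorem mem_qhLines {F : Type} [Field F] [Finite F] {n : ℕ} {π l : Submodule F (Fin n → F)} :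
    l ∈ qhLines π ↔ l ≤ π ∧ finrank F l = 2 := by
  simp [qhLines]

open Classical in
theorem qh_lines_filter {F : Type} [Field F] [Finite F] {n : ℕ} (π : Submodule F (Fin n → F))
    (R : ProjPoint F n) : (qhLines π).filter (fun l => R.1 ≤ l) = qhMid R.1 π := by
  ext l
  simp only [Finset.mem_filter, mem_qhLines, mem_qhMid, R.2]
  tauto

theorem qh_plane_pts {F : Type} [Field F] [Fintype F] {n : ℕ} (π : Submodule F (Fin n → F))
    (h : finrank F π = 3) :
    (qhCnt Set.univ π : ℤ) = (Fintype.card F : ℤ) ^ 2 + Fintype.card F + 1 := by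
  obtain ⟨b, hb, hbπ⟩ := qh_exists_mid ⊥ π bot_le (by simp [h])
  have hb0 : b ≠ 0 := by simpa using hb
  have hle : (qhPt b hb0).1 ≤ π := by simpa [qhPt] using hbπ
  have h1 := qh_partition Set.univ (qhPt b hb0).1 π hle
  have h2 := qh_mid_card (qhPt b hb0).1 π hle (by rw [h, (qhPt b hb0).2])
  rw [qh_pt_univ, Finset.sum_congr rfl (g := fun _ => (Fintype.card F : ℤ))] at h1
  · rw [Finset.sum_const, h2, nsmul_eq_mul] at h1
    push_cast at h1
    linarith
  · intro X hX
    rw [mem_qhMid, (qhPt b hb0).2] at hX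
    rw [qh_line_pts X hX.2.2]
    push_cast; ring

theorem qh_lines_card {F : Type} [Field F] [Fintype F] {n : ℕ} (π : Submodule F (Fin n → F))
    (h : finrank F π = 3) :
    ((qhLines π).card : ℤ) = (Fintype.card F : ℤ) ^ 2 + Fintype.card F + 1 := by
  classical
  have h1 := qh_dc Set.univ π (qhLines π) (fun l hl => (mem_qhLines.1 hl).1) (fun _ => 1)
  rw [Finset.sum_congr rfl (g := fun _ => (Fintype.card F + 1 : ℤ))] at h1
  swap
  · intro l hl
    rw [qh_line_pts l (mem_qhLines.1 hl).2]
    push_cast; ring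
  rw [Finset.sum_const] at h1
  rw [Finset.sum_congr (s₁ := qhPts Set.univ π) rfl (g := fun _ => (Fintype.card F + 1 : ℤ))] at h1
  swap
  · intro R hR
    have e : ∑ l ∈ (qhLines π).filter (fun l => R.1 ≤ l), (1 : ℤ) = Fintype.card F + 1 := by
      rw [qh_lines_filter, Finset.sum_const,
        qh_mid_card R.1 π (mem_qhPts.1 hR).2 (by rw [h, R.2])]
      simp
    convert e
  rw [Finset.sum_const, qh_pts_card, nsmul_eq_mul, nsmul_eq_mul, qh_plane_pts π h] at h1
  have : (Fintype.card F + 1 : ℤ) ≠ 0 := by positivity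
  exact mul_right_cancel₀ this h1

theorem qh_thr {F : Type} [Field F] [Fintype F] {n : ℕ} (V : Set (ProjPoint F n))
    (R : ProjPoint F n) (hR : R ∈ V) (π : Submodule F (Fin n → F)) (h : R.1 ≤ π) :
    ∑ l ∈ qhMid R.1 π, ((qhCnt V l : ℤ) - 1) = qhCnt V π - 1 := by
  have := qh_partition V R.1 π h
  rw [qh_cnt_pt, if_pos hR] at this
  exact_mod_cast this

/-- The number of big planes through a line is the number of points of the line. -/
theorem qh_big {F : Type} [Field F] [Fintype F] (q : ℕ) (hq : 4 < q)
    (hF : Fintype.card F = q ^ 2) (V : Set (ProjPoint F (3 + 1)))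
    (hT : (qhCnt V ⊤ : ℤ) = ((q : ℤ) ^ 2 + 1) * ((q : ℤ) ^ 3 + 1))
    (hN : ∀ H : Submodule F (Fin (3 + 1) → F), finrank F H = 3 →
      (qhCnt V H : ℤ) = (q : ℤ) ^ 3 + 1 ∨ (qhCnt V H : ℤ) = (q : ℤ) ^ 3 + (q : ℤ) ^ 2 + 1)
    (l : Submodule F (Fin (3 + 1) → F)) (hl : finrank F l = 2) :
    ((qhMid l ⊤).filter fun X => (qhCnt V X : ℤ) = (q : ℤ) ^ 3 + (q : ℤ) ^ 2 + 1).card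
      = qhCnt V l := by
  have hq0 : (q : ℤ) ^ 2 ≠ 0 := by positivity
  have h1 := qh_partition V l ⊤ le_top
  have h2 := qh_mid_card l ⊤ le_top (by rw [hl]; simp)
  have h3 : ∀ X ∈ qhMid l ⊤, ((qhCnt V X : ℤ) - qhCnt V l) = ((q : ℤ) ^ 3 + 1 - qhCnt V l) +
      (q : ℤ) ^ 2 * (if (qhCnt V X : ℤ) = (q : ℤ) ^ 3 + (q : ℤ) ^ 2 + 1 then 1 else 0) := by
    intro X hX
    rw [mem_qhMid, hl] at hX
    split_ifs with hc
    · rw [hc]; ring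
    · rcases hN X hX.2.2 with h | h
      · rw [h]; ring
      · exact absurd h hc
  rw [Finset.sum_congr rfl h3, Finset.sum_add_distrib, Finset.sum_const, h2, ← Finset.mul_sum,
    Finset.sum_boole, hT, hF, nsmul_eq_mul] at h1
  push_cast at h1
  have : (q : ℤ) ^ 2 * (((qhMid l ⊤).filter fun X =>
      (qhCnt V X : ℤ) = (q : ℤ) ^ 3 + (q : ℤ) ^ 2 + 1).card : ℤ) = (q : ℤ) ^ 2 * qhCnt V l := by
    linear_combination h1
  exact_mod_cast mul_left_cancel₀ hq0 this

theorem qh_ex_small {F : Type} [Field F] [Fintype F] (q : ℕ) (hq : 4 < q)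
    (hF : Fintype.card F = q ^ 2) (V : Set (ProjPoint F (3 + 1)))
    (hT : (qhCnt V ⊤ : ℤ) = ((q : ℤ) ^ 2 + 1) * ((q : ℤ) ^ 3 + 1))
    (hN : ∀ H : Submodule F (Fin (3 + 1) → F), finrank F H = 3 →
      (qhCnt V H : ℤ) = (q : ℤ) ^ 3 + 1 ∨ (qhCnt V H : ℤ) = (q : ℤ) ^ 3 + (q : ℤ) ^ 2 + 1)
    (l : Submodule F (Fin (3 + 1) → F)) (hl : finrank F l = 2) (hlt : qhCnt V l < q ^ 2 + 1) :
    ∃ X, l ≤ X ∧ finrank F X = 3 ∧ (qhCnt V X : ℤ) = (q : ℤ) ^ 3 + 1 := by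
  have h1 := qh_big q hq hF V hT hN l hl
  have h2 := qh_mid_card l ⊤ le_top (by rw [hl]; simp)
  by_contra hcon
  push Not at hcon
  rw [Finset.filter_true_of_mem, h2, hF] at h1
  · omega
  · intro X hX
    rw [mem_qhMid, hl] at hX
    exact (hN X hX.2.2).resolve_left (hcon X hX.1 hX.2.2)

theorem qh_ex_big {F : Type} [Field F] [Fintype F] (q : ℕ) (hq : 4 < q)
    (hF : Fintype.card F = q ^ 2) (V : Set (ProjPoint F (3 + 1)))
    (hT : (qhCnt V ⊤ : ℤ) = ((q : ℤ) ^ 2 + 1) * ((q : ℤ) ^ 3 + 1))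
    (hN : ∀ H : Submodule F (Fin (3 + 1) → F), finrank F H = 3 →
      (qhCnt V H : ℤ) = (q : ℤ) ^ 3 + 1 ∨ (qhCnt V H : ℤ) = (q : ℤ) ^ 3 + (q : ℤ) ^ 2 + 1)
    (l : Submodule F (Fin (3 + 1) → F)) (hl : finrank F l = 2) (hlt : 0 < qhCnt V l) :
    ∃ X, l ≤ X ∧ finrank F X = 3 ∧ (qhCnt V X : ℤ) = (q : ℤ) ^ 3 + (q : ℤ) ^ 2 + 1 := by
  rw [← qh_big q hq hF V hT hN l hl, Finset.card_pos] at hlt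
  obtain ⟨X, hX⟩ := hlt
  rw [Finset.mem_filter, mem_qhMid, hl] at hX
  exact ⟨X, hX.1.1, hX.1.2.2, hX.2⟩

theorem qh_full_big {F : Type} [Field F] [Fintype F] (q : ℕ) (hq : 4 < q)
    (hF : Fintype.card F = q ^ 2) (V : Set (ProjPoint F (3 + 1)))
    (hT : (qhCnt V ⊤ : ℤ) = ((q : ℤ) ^ 2 + 1) * ((q : ℤ) ^ 3 + 1))
    (hN : ∀ H : Submodule F (Fin (3 + 1) → F), finrank F H = 3 →
      (qhCnt V H : ℤ) = (q : ℤ) ^ 3 + 1 ∨ (qhCnt V H : ℤ) = (q : ℤ) ^ 3 + (q : ℤ) ^ 2 + 1)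
    (l : Submodule F (Fin (3 + 1) → F)) (hl : finrank F l = 2) (hlt : qhCnt V l = q ^ 2 + 1)
    (X : Submodule F (Fin (3 + 1) → F)) (hlX : l ≤ X) (hX : finrank F X = 3) :
    (qhCnt V X : ℤ) = (q : ℤ) ^ 3 + (q : ℤ) ^ 2 + 1 := by
  have h1 := qh_big q hq hF V hT hN l hl
  have h2 := qh_mid_card l ⊤ le_top (by rw [hl]; simp)
  rw [hlt, ← hF, ← h2, Finset.card_filter_eq_iff] at h1
  exact h1 X (mem_qhMid.2 ⟨hlX, le_top, by rw [hX, hl]⟩)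

/-- Through a point off `V`: a plane as a pencil of lines. -/
theorem qh_off_plane {F : Type} [Field F] [Fintype F] {n : ℕ} (V : Set (ProjPoint F n))
    (u a b : Fin n → F) (hu : u ≠ 0) (huV : qhPt u hu ∉ V)
    (hb : b ∉ Submodule.span F {u}) (ha : a ∉ Submodule.span F {u} ⊔ Submodule.span F {b}) :
    (qhCnt V (Submodule.span F {u} ⊔ Submodule.span F {b} ⊔ Submodule.span F {a}) : ℤ) =
      ∑ y : F, (qhCnt V (Submodule.span F {u} ⊔ Submodule.span F {a + y • b}) : ℤ) +
      qhCnt V (Submodule.span F {u} ⊔ Submodule.span F {b}) := by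
  have h := qh_partition V (Submodule.span F {u})
    (Submodule.span F {u} ⊔ Submodule.span F {b} ⊔ Submodule.span F {a})
    (le_sup_left.trans le_sup_left)
  have h0 : qhCnt V (Submodule.span F {u}) = 0 := by
    have := qh_cnt_pt V (qhPt u hu)
    rw [if_neg huV] at this
    exact this
  rw [qh_mid_sum _ a b hb ha, h0] at h
  simp only [Nat.cast_zero, sub_zero] at h
  exact h.symm

theorem qh_pos {F : Type} [Field F] [Fintype F] (p q : ℕ) (hp : p.Prime) [CharP F p]
    (hpq : p ∣ q) (V : Set (ProjPoint F (3 + 1)))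
    (hcode : charVec F p (3 + 1) V ∈ hypCode F p (3 + 1))
    (hN : ∀ H : Submodule F (Fin (3 + 1) → F), finrank F H = 3 →
      (qhCnt V H : ℤ) = (q : ℤ) ^ 3 + 1 ∨ (qhCnt V H : ℤ) = (q : ℤ) ^ 3 + (q : ℤ) ^ 2 + 1)
    (l : Submodule F (Fin (3 + 1) → F)) (hl : finrank F l = 2) : 0 < qhCnt V l := by
  by_contra hcon
  have hz : qhCnt V l = 0 := by omega
  obtain ⟨P, hPV, hPl⟩ := qh_exists_off V l hl (by omega)
  obtain ⟨u, hu, rfl⟩ := qh_pt_span P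
  obtain ⟨b, hb, rfl⟩ := qh_exists_ext _ l hPl (by rw [hl, (qhPt u hu).2])
  obtain ⟨a, ha, -⟩ := qh_exists_mid _ ⊤ (le_top : (qhPt u hu).1 ⊔ Submodule.span F {b} ≤ ⊤)
    (by rw [hl]; simp)
  have h1 := (qh_pencil p hp V hcode u a b hu hPV hb ha).2
  have h2 := qh_off_plane V u a b hu hPV hb ha
  have h3 := hN (Submodule.span F {u} ⊔ Submodule.span F {b} ⊔ Submodule.span F {a})
    (by
      have := qh_sup_finrank _ a ha
      rw [hl] at this
      exact this)
  have hz' : qhCnt V (Submodule.span F {u} ⊔ Submodule.span F {b}) = 0 := hz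
  have hd : (p : ℤ) ∣ ∑ y : F, (qhCnt V (Submodule.span F {u} ⊔ Submodule.span F {a + y • b}) : ℤ) := by
    exact_mod_cast Int.natCast_dvd_natCast.2 h1
  have hpq' : (p : ℤ) ∣ q := Int.natCast_dvd_natCast.2 hpq
  rw [h2, hz'] at h3
  have : (p : ℤ) ∣ 1 := by
    obtain ⟨c, hc⟩ := hd
    obtain ⟨d, hd⟩ := hpq'
    rw [hc, hd] at h3
    rcases h3 with h | h
    · refine ⟨c - p ^ 2 * d ^ 3, ?_⟩
      push_cast at h
      linear_combination -h
    · refine ⟨c - p ^ 2 * d ^ 3 - p * d ^ 2, ?_⟩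
      push_cast at h
      linear_combination -h
  have : p ∣ 1 := by exact_mod_cast this
  exact hp.one_lt.ne' (Nat.dvd_one.1 this)

theorem qh_gap {F : Type} [Field F] [Fintype F] (p q : ℕ) (hp : p.Prime) [CharP F p]
    (hpq : p ∣ q) (hq : 4 < q)
    (hF : Fintype.card F = q ^ 2) (V : Set (ProjPoint F (3 + 1)))
    (hcode : charVec F p (3 + 1) V ∈ hypCode F p (3 + 1))
    (hT : (qhCnt V ⊤ : ℤ) = ((q : ℤ) ^ 2 + 1) * ((q : ℤ) ^ 3 + 1))
    (hN : ∀ H : Submodule F (Fin (3 + 1) → F), finrank F H = 3 →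
      (qhCnt V H : ℤ) = (q : ℤ) ^ 3 + 1 ∨ (qhCnt V H : ℤ) = (q : ℤ) ^ 3 + (q : ℤ) ^ 2 + 1)
    (l : Submodule F (Fin (3 + 1) → F)) (hl : finrank F l = 2) :
    (qhCnt V l : ℤ) ≤ q + 1 ∨ (q : ℤ) ^ 2 - q ≤ qhCnt V l := by
  by_cases hlt : qhCnt V l < q ^ 2 + 1
  swap
  · right
    have : (q : ℤ) ^ 2 + 1 ≤ qhCnt V l := by exact_mod_cast not_lt.1 hlt
    have : (0 : ℤ) ≤ q := by positivity
    linarith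
  obtain ⟨P, hPV, hPl⟩ := qh_exists_off V l hl (by rw [hF]; exact hlt)
  obtain ⟨π, hlπ, hπ, hπN⟩ := qh_ex_small q hq hF V hT hN l hl hlt
  obtain ⟨u, hu, rfl⟩ := qh_pt_span P
  obtain ⟨a, ha, rfl⟩ := qh_exists_ext _ l hPl (by rw [hl, (qhPt u hu).2])
  obtain ⟨b, hb, rfl⟩ := qh_exists_ext _ π hlπ (by rw [hπ, hl])
  have hub : b ∉ Submodule.span F {u} := fun h => hb (Submodule.mem_sup_left h)
  have hab : a ∉ Submodule.span F {u} ⊔ Submodule.span F {b} := by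
    intro h
    have hle : (qhPt u hu).1 ⊔ Submodule.span F {a} ⊔ Submodule.span F {b} ≤
        Submodule.span F {u} ⊔ Submodule.span F {b} := by
      refine sup_le (sup_le le_sup_left ?_) le_sup_right
      simpa using h
    have h1 := Submodule.finrank_mono hle
    have h2 := qh_sup_finrank _ b hub
    rw [finrank_span_singleton hu] at h2
    omega
  have h1 := (qh_pencil p hp V hcode u a b hu hPV hub hab).1 0
  have h2 := qh_off_plane V u a b hu hPV hub hab
  have h3 : 0 < qhCnt V (Submodule.span F {u} ⊔ Submodule.span F {b}) :=
    qh_pos p q hp hpq V hcode hN _ (by rw [qh_sup_finrank _ b hub, finrank_span_singleton hu])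
  have e : Submodule.span F {u} ⊔ Submodule.span F {b} ⊔ Submodule.span F {a} =
      (qhPt u hu).1 ⊔ Submodule.span F {a} ⊔ Submodule.span F {b} := sup_right_comm _ _ _
  rw [e, hπN] at h2
  simp only [zero_smul, add_zero] at h1
  have e2 : (qhPt u hu).1 ⊔ Submodule.span F {a} = Submodule.span F {u} ⊔ Submodule.span F {a} :=
    rfl
  have hm0 : 0 < qhCnt V ((qhPt u hu).1 ⊔ Submodule.span F {a}) :=
    qh_pos p q hp hpq V hcode hN _ hl
  rw [e2] at hm0 ⊢
  generalize qhCnt V (Submodule.span F {u} ⊔ Submodule.span F {a}) = m at *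
  generalize qhCnt V (Submodule.span F {u} ⊔ Submodule.span F {b}) = k at *
  generalize (fun y : F => qhCnt V (Submodule.span F {u} ⊔ Submodule.span F {a + y • b})) = g at *
  have h4 : ∑ y : F, ((m : ℤ) - qhCnt V (Submodule.span F {u} ⊔ Submodule.span F {a + y • b})) ≤
      (m : ℤ) * (m - 1) := by
    have h5 : (∑ y : F, ((m - qhCnt V (Submodule.span F {u} ⊔ Submodule.span F {a + y • b}) : ℕ) : ℤ))
        ≤ (m : ℤ) * (m - 1) := by
      have : ((m - 1 : ℕ) : ℤ) = (m : ℤ) - 1 := by omega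
      rw [← this]
      exact_mod_cast h1
    refine le_trans (Finset.sum_le_sum ?_) h5
    intro y _
    omega
  rw [Finset.sum_sub_distrib, Finset.sum_const, Finset.card_univ, hF, nsmul_eq_mul] at h4
  push_cast at h4
  have hk : (1 : ℤ) ≤ k := by exact_mod_cast h3
  have hq' : (5 : ℤ) ≤ q := by exact_mod_cast hq
  by_contra hcon
  push Not at hcon
  obtain ⟨c1, c2⟩ := hcon
  have c1' : (0 : ℤ) ≤ m - (q + 2) := by linarith
  have c2' : (0 : ℤ) ≤ (q ^ 2 - q - 1) - m := by linarith
  nlinarith [mul_nonneg c1' c2']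

/-- A plane cannot contain many long lines. -/
theorem qh_few_long {F : Type} [Field F] [Fintype F] {n : ℕ} (q : ℕ) (hq : 4 < q)
    (V : Set (ProjPoint F n)) (π : Submodule F (Fin n → F))
    (hN : (qhCnt V π : ℤ) = (q : ℤ) ^ 3 + (q : ℤ) ^ 2 + 1)
    (T : Finset (Submodule F (Fin n → F))) (hT : ∀ l ∈ T, l ≤ π ∧ finrank F l = 2)
    (hl : ∀ l ∈ T, (q : ℤ) ^ 2 - q ≤ qhCnt V l) (hc : T.card = q + 5) : False := by
  classical
  have hq' : (5 : ℤ) ≤ q := by exact_mod_cast hq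
  let j : ProjPoint F n → ℤ := fun R => ∑ l ∈ T.filter (fun l => R.1 ≤ l), 1
  have h1 := qh_dc V π T (fun l h => (hT l h).1) (fun _ => 1)
  have h1' : ∑ l ∈ T, (qhCnt V l : ℤ) = ∑ R ∈ qhPts V π, j R := by
    simp only [one_mul] at h1
    rw [h1]
  have h2 : ∑ R ∈ qhPts V π, j R * j R = ∑ l ∈ T, ∑ R ∈ qhPts V l, j R := by
    have : ∀ R ∈ qhPts V π, j R * j R = ∑ l ∈ T.filter (fun l => R.1 ≤ l), j R := by
      intro R _
      rw [Finset.sum_const]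
      simp [j]
    rw [Finset.sum_congr rfl this]
    apply Finset.sum_comm'
    intro R l
    simp only [mem_qhPts, Finset.mem_filter]
    constructor
    · rintro ⟨⟨h1, h2⟩, h3, h4⟩
      exact ⟨⟨h1, h4⟩, h3⟩
    · rintro ⟨⟨h1, h3⟩, h2⟩
      exact ⟨⟨h1, h3.trans (hT l h2).1⟩, h2, h3⟩
  have h3 : ∀ l ∈ T, ∑ R ∈ qhPts V l, j R ≤ qhCnt V l + ((q : ℤ) + 4) := by
    intro l hlT
    have e : ∑ R ∈ qhPts V l, j R =
        ∑ l' ∈ T, ∑ R ∈ (qhPts V l).filter (fun R => R.1 ≤ l'), (1 : ℤ) := by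
      apply Finset.sum_comm'
      intro R l'
      simp only [Finset.mem_filter]
      tauto
    rw [e, ← Finset.add_sum_erase _ _ hlT]
    apply add_le_add
    · rw [← qh_pts_card]
      simp only [Finset.sum_const, nsmul_eq_mul, mul_one]
      exact_mod_cast Finset.card_filter_le _ _
    · have : ∀ l' ∈ T.erase l, ∑ R ∈ (qhPts V l).filter (fun R => R.1 ≤ l'), (1 : ℤ) ≤ 1 := by
        intro l' hl'
        rw [Finset.mem_erase] at hl'
        simp only [Finset.sum_const, nsmul_eq_mul, mul_one]
        have : ((qhPts V l).filter (fun R => R.1 ≤ l')).card ≤ 1 := by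
          rw [Finset.card_le_one]
          intro P hP R hR
          simp only [Finset.mem_filter, mem_qhPts] at hP hR
          by_contra hPR
          exact hl'.1 (qh_line_unique P R hPR l' l (hT l' hl'.2).2 (hT l hlT).2
            hP.2 hR.2 hP.1.2 hR.1.2)
        exact_mod_cast this
      refine (Finset.sum_le_sum this).trans ?_
      rw [Finset.sum_const, Finset.card_erase_of_mem hlT, hc]
      simp
  have h4 := Finset.sum_le_sum h3
  rw [← h2, Finset.sum_add_distrib, Finset.sum_const, hc, h1', nsmul_eq_mul] at h4
  have h5 : (0 : ℤ) ≤ ∑ R ∈ qhPts V π, (j R * j R - 3 * j R + 2) := by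
    apply Finset.sum_nonneg
    intro R _
    rcases le_or_gt (j R) 1 with h | h
    · nlinarith
    · have : (2 : ℤ) ≤ j R := h
      nlinarith
  rw [Finset.sum_add_distrib, Finset.sum_sub_distrib, ← Finset.mul_sum, Finset.sum_const,
    qh_pts_card, nsmul_eq_mul, hN] at h5
  have h6 := Finset.sum_le_sum hl
  rw [h1', Finset.sum_const, hc, nsmul_eq_mul] at h6
  push_cast at h4 h5 h6
  nlinarith

theorem qh_nolong {F : Type} [Field F] [Fintype F] (q : ℕ) (hq : 4 < q)
    (hF : Fintype.card F = q ^ 2) (V : Set (ProjPoint F (3 + 1)))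
    (hT : (qhCnt V ⊤ : ℤ) = ((q : ℤ) ^ 2 + 1) * ((q : ℤ) ^ 3 + 1))
    (hN : ∀ H : Submodule F (Fin (3 + 1) → F), finrank F H = 3 →
      (qhCnt V H : ℤ) = (q : ℤ) ^ 3 + 1 ∨ (qhCnt V H : ℤ) = (q : ℤ) ^ 3 + (q : ℤ) ^ 2 + 1)
    (hgap : ∀ l : Submodule F (Fin (3 + 1) → F), finrank F l = 2 →
      (qhCnt V l : ℤ) ≤ q + 1 ∨ (q : ℤ) ^ 2 - q ≤ qhCnt V l)
    (l : Submodule F (Fin (3 + 1) → F)) (hl : finrank F l = 2) :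
    (qhCnt V l : ℤ) ≤ q + 1 ∨ qhCnt V l = q ^ 2 + 1 := by
  classical
  by_contra hcon
  push Not at hcon
  obtain ⟨c1, c2⟩ := hcon
  have hle : qhCnt V l ≤ q ^ 2 + 1 := by
    rw [← hF, ← qh_line_pts l hl]
    exact qh_cnt_le V l
  have c3 : qhCnt V l ≤ q ^ 2 := by omega
  have c3' : (qhCnt V l : ℤ) ≤ (q : ℤ) ^ 2 := by exact_mod_cast c3
  obtain ⟨π, hlπ, hπ, hπN⟩ := qh_ex_big q hq hF V hT hN l hl (by omega)
  have hex : ∀ R : ProjPoint F (3 + 1), R ∈ qhPts V l →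
      ∃ l', l' ≤ π ∧ finrank F l' = 2 ∧ R.1 ≤ l' ∧ l' ≠ l ∧ (q : ℤ) + 1 < qhCnt V l' := by
    intro R hR
    rw [mem_qhPts] at hR
    by_contra hno
    push Not at hno
    have hRπ : R.1 ≤ π := hR.2.trans hlπ
    have h1 := qh_thr V R hR.1 π hRπ
    have h2 := qh_mid_card R.1 π hRπ (by rw [hπ, R.2])
    have hlm : l ∈ qhMid R.1 π := by
      rw [mem_qhMid, R.2]
      exact ⟨hR.2, hlπ, hl⟩
    rw [← Finset.add_sum_erase _ _ hlm] at h1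
    have h3 : ∑ x ∈ (qhMid R.1 π).erase l, ((qhCnt V x : ℤ) - 1) ≤
        ∑ x ∈ (qhMid R.1 π).erase l, (q : ℤ) := by
      apply Finset.sum_le_sum
      intro x hx
      rw [Finset.mem_erase, mem_qhMid, R.2] at hx
      have := hno x hx.2.2.1 hx.2.2.2 hx.2.1 hx.1
      linarith
    rw [Finset.sum_const, Finset.card_erase_of_mem hlm, h2, hF, nsmul_eq_mul] at h3
    have e3 : ((q ^ 2 + 1 - 1 : ℕ) : ℤ) = (q : ℤ) ^ 2 := by simp
    rw [e3] at h3
    nlinarith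
  choose! g hg using hex
  have hinj : Set.InjOn g (qhPts V l) := by
    intro R hR S hS hRS
    by_contra hne
    have hR1 := hg R hR
    have hS1 := hg S hS
    rw [← hRS] at hS1
    exact hR1.2.2.2.1 (qh_line_unique R S hne _ l hR1.2.1 hl hR1.2.2.1 hS1.2.2.1
      (mem_qhPts.1 hR).2 (mem_qhPts.1 hS).2)
  have hcard : ((qhPts V l).image g).card = qhCnt V l := by
    rw [Finset.card_image_of_injOn hinj, qh_pts_card]
  have hlong : (q : ℤ) ^ 2 - q ≤ qhCnt V l := (hgap l hl).resolve_left (by linarith)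
  have hq' : (5 : ℤ) ≤ q := by exact_mod_cast hq
  have h5 : q + 5 ≤ ((qhPts V l).image g).card := by
    rw [hcard]
    have : (q : ℤ) + 5 ≤ qhCnt V l := by nlinarith
    exact_mod_cast this
  obtain ⟨T, hTs, hTc⟩ := Finset.exists_subset_card_eq h5
  refine qh_few_long q hq V π hπN T ?_ ?_ hTc
  · intro x hx
    obtain ⟨R, hR, rfl⟩ := Finset.mem_image.1 (hTs hx)
    exact ⟨(hg R hR).1, (hg R hR).2.1⟩
  · intro x hx
    obtain ⟨R, hR, rfl⟩ := Finset.mem_image.1 (hTs hx)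
    exact (hgap _ (hg R hR).2.1).resolve_left (by linarith [(hg R hR).2.2.2.2])

theorem qh_small_plane {F : Type} [Field F] [Fintype F] {n : ℕ} (q : ℕ)
    (hF : Fintype.card F = q ^ 2) (V : Set (ProjPoint F n)) (π : Submodule F (Fin n → F))
    (hπ : finrank F π = 3) (hN : (qhCnt V π : ℤ) = (q : ℤ) ^ 3 + 1)
    (hb : ∀ l ≤ π, finrank F l = 2 → (1 : ℤ) ≤ qhCnt V l ∧ (qhCnt V l : ℤ) ≤ q + 1)
    (l : Submodule F (Fin n → F)) (hlπ : l ≤ π) (hl : finrank F l = 2) :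
    (qhCnt V l : ℤ) = 1 ∨ (qhCnt V l : ℤ) = q + 1 := by
  classical
  have hthr : ∀ R ∈ qhPts V π, ∀ c : ℤ, ∑ l ∈ qhMid R.1 π, (c - qhCnt V l) =
      ((q : ℤ) ^ 2 + 1) * (c - 1) - (q : ℤ) ^ 3 := by
    intro R hR c
    rw [mem_qhPts] at hR
    have h1 := qh_thr V R hR.1 π hR.2
    have h2 := qh_mid_card R.1 π hR.2 (by rw [hπ, R.2])
    rw [Finset.sum_sub_distrib, Finset.sum_const, h2, hF, nsmul_eq_mul] at h1 ⊢
    push_cast at h1 ⊢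
    linear_combination hN * (-1) - h1
  have hA := qh_dc V π (qhLines π) (fun l hl => (mem_qhLines.1 hl).1)
    (fun l => (q : ℤ) + 1 - qhCnt V l)
  have hB := qh_dc V π (qhLines π) (fun l hl => (mem_qhLines.1 hl).1) (fun _ => 1)
  have hA' : ∑ l ∈ qhLines π, ((q : ℤ) + 1 - qhCnt V l) * qhCnt V l =
      ((q : ℤ) ^ 3 + 1) * q := by
    rw [hA, Finset.sum_congr rfl (g := fun _ => (q : ℤ))]
    · rw [Finset.sum_const, qh_pts_card, nsmul_eq_mul, hN]
    · intro R hR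
      have e := hthr R hR ((q : ℤ) + 1)
      rw [← qh_lines_filter] at e
      have e2 : ((q : ℤ) ^ 2 + 1) * ((q : ℤ) + 1 - 1) - (q : ℤ) ^ 3 = q := by ring
      rw [e2] at e
      convert e
  have hB' : ∑ l ∈ qhLines π, (qhCnt V l : ℤ) = ((q : ℤ) ^ 3 + 1) * ((q : ℤ) ^ 2 + 1) := by
    simp only [one_mul] at hB
    rw [hB, Finset.sum_congr rfl (g := fun _ => (q : ℤ) ^ 2 + 1)]
    · rw [Finset.sum_const, qh_pts_card, nsmul_eq_mul, hN]
    · intro R hR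
      have e : ∑ l ∈ (qhLines π).filter (fun l => R.1 ≤ l), (1 : ℤ) = (q : ℤ) ^ 2 + 1 := by
        rw [qh_lines_filter, Finset.sum_const,
          qh_mid_card R.1 π (mem_qhPts.1 hR).2 (by rw [hπ, R.2]), hF]
        simp
      convert e
  have hC := qh_lines_card π hπ
  rw [hF] at hC
  have hz : ∑ l ∈ qhLines π, ((qhCnt V l : ℤ) - 1) * ((q : ℤ) + 1 - qhCnt V l) = 0 := by
    have : ∀ l ∈ qhLines π, ((qhCnt V l : ℤ) - 1) * ((q : ℤ) + 1 - qhCnt V l) =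
        ((q : ℤ) + 1 - qhCnt V l) * qhCnt V l - ((q : ℤ) + 1) + qhCnt V l := by
      intro l _
      ring
    rw [Finset.sum_congr rfl this, Finset.sum_add_distrib, Finset.sum_sub_distrib, hA', hB',
      Finset.sum_const, nsmul_eq_mul, hC]
    push_cast
    ring
  rw [Finset.sum_eq_zero_iff_of_nonneg] at hz
  · have := hz l (mem_qhLines.2 ⟨hlπ, hl⟩)
    rcases mul_eq_zero.1 this with h | h
    · left; linarith
    · right; linarith
  · intro x hx
    rw [mem_qhLines] at hx
    have := hb x hx.1 hx.2
    exact mul_nonneg (by linarith) (by linarith)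

theorem qh_pt_main {F : Type} [Field F] [Fintype F] (q : ℕ) (hq : 4 < q)
    (hF : Fintype.card F = q ^ 2) (V : Set (ProjPoint F (3 + 1)))
    (hT : (qhCnt V ⊤ : ℤ) = ((q : ℤ) ^ 2 + 1) * ((q : ℤ) ^ 3 + 1))
    (hN : ∀ H : Submodule F (Fin (3 + 1) → F), finrank F H = 3 →
      (qhCnt V H : ℤ) = (q : ℤ) ^ 3 + 1 ∨ (qhCnt V H : ℤ) = (q : ℤ) ^ 3 + (q : ℤ) ^ 2 + 1)
    (hline : ∀ l : Submodule F (Fin (3 + 1) → F), finrank F l = 2 →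
      qhCnt V l = 1 ∨ qhCnt V l = q + 1 ∨ qhCnt V l = q ^ 2 + 1)
    (P : ProjPoint F (3 + 1)) (hP : P ∈ V) :
    ∃ l : Submodule F (Fin (3 + 1) → F), finrank F l = 2 ∧ P.1 ≤ l ∧ qhCnt V l = q + 1 := by
  by_contra hcon
  push Not at hcon
  have hq' : (5 : ℤ) ≤ q := by exact_mod_cast hq
  have hbig : ∀ X : Submodule F (Fin (3 + 1) → F), P.1 ≤ X → finrank F X = 3 →
      (qhCnt V X : ℤ) ≠ (q : ℤ) ^ 3 + 1 := by
    intro X hPX hX hc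
    have h1 := qh_thr V P hP X hPX
    rw [Finset.sum_eq_zero, hc] at h1
    · have : (0 : ℤ) < (q : ℤ) ^ 3 := by positivity
      linarith
    · intro l hl
      rw [mem_qhMid, P.2] at hl
      rcases hline l hl.2.2 with h | h | h
      · rw [h]; simp
      · exact absurd h (hcon l hl.2.2 hl.1)
      · have := qh_full_big q hq hF V hT hN l hl.2.2 h X hl.2.1 hX
        have : (0 : ℤ) < (q : ℤ) ^ 2 := by positivity
        linarith
  have hfull : ∀ l : Submodule F (Fin (3 + 1) → F), P.1 ≤ l → finrank F l = 2 →
      qhCnt V l = q ^ 2 + 1 := by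
    intro l hPl hl
    by_contra hne
    have hle : qhCnt V l ≤ q ^ 2 + 1 := by
      rw [← hF, ← qh_line_pts l hl]
      exact qh_cnt_le V l
    obtain ⟨X, h1, h2, h3⟩ := qh_ex_small q hq hF V hT hN l hl (by omega)
    exact hbig X (hPl.trans h1) h2 h3
  obtain ⟨b, hb, -⟩ := qh_exists_mid P.1 ⊤ le_top (by rw [P.2]; simp)
  obtain ⟨a, ha, -⟩ := qh_exists_mid _ ⊤ (le_top : P.1 ⊔ Submodule.span F {b} ≤ ⊤)
    (by rw [qh_sup_finrank _ _ hb, P.2]; simp)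
  have hfr : finrank F (P.1 ⊔ Submodule.span F {b} ⊔ Submodule.span F {a} :
      Submodule F (Fin (3 + 1) → F)) = 3 := by
    rw [qh_sup_finrank _ _ ha, qh_sup_finrank _ _ hb, P.2]
  have hle : P.1 ≤ P.1 ⊔ Submodule.span F {b} ⊔ Submodule.span F {a} :=
    le_sup_left.trans le_sup_left
  have h1 := qh_thr V P hP _ hle
  have h2 := qh_mid_card P.1 _ hle (by rw [hfr, P.2])
  rw [Finset.sum_congr rfl (g := fun _ => (q : ℤ) ^ 2),
    (hN _ hfr).resolve_left (hbig _ hle hfr), Finset.sum_const, h2, hF, nsmul_eq_mul] at h1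
  · push_cast at h1
    nlinarith [sq_nonneg (q : ℤ), mul_pos (by linarith : (0 : ℤ) < q) (by linarith : (0 : ℤ) < q)]
  · intro l hl
    rw [mem_qhMid, P.2] at hl
    rw [hfull l hl.1 hl.2.2]
    push_cast
    ring

/-- in PG(3, q²), every line meets `V` in `1`, `q + 1` or `q² + 1`
points, and every point of `V` lies on a line meeting `V` in exactly `q + 1` points. -/
theorem stmt12 (p h q : ℕ) (hp : p.Prime) (hh : 1 ≤ h) (hq : q = p ^ h) (hq4 : 4 < q)
    (F : Type) [Field F] [Fintype F] (hF : Fintype.card F = q ^ 2)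
    (V : Set (ProjPoint F (3 + 1))) (hV : IsQuasiHermitian F q 3 V)
    (hcode : charVec F p (3 + 1) V ∈ hypCode F p (3 + 1)) :
    (∀ ℓ : Submodule F (Fin (3 + 1) → F), finrank F ℓ = 2 →
      secant F (3 + 1) V ℓ = 1 ∨ secant F (3 + 1) V ℓ = q + 1 ∨
        secant F (3 + 1) V ℓ = q ^ 2 + 1) ∧
    (∀ P ∈ V, ∃ ℓ : Submodule F (Fin (3 + 1) → F), finrank F ℓ = 2 ∧
      P.1 ≤ ℓ ∧ secant F (3 + 1) V ℓ = q + 1) := by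
  have : Fact p.Prime := ⟨hp⟩
  have : CharP F p := charP_of_card_eq_prime_pow (f := h * 2) (by rw [hF, hq, pow_mul])
  have hpq : p ∣ q := by rw [hq]; exact dvd_pow_self p (by omega)
  have hq' : (5 : ℤ) ≤ q := by exact_mod_cast hq4
  have hq1 : (q : ℤ) ^ 2 - 1 ≠ 0 := by nlinarith
  obtain ⟨hV1, hV2⟩ := hV
  have hT : (qhCnt V ⊤ : ℤ) = ((q : ℤ) ^ 2 + 1) * ((q : ℤ) ^ 3 + 1) := by
    have e : qhCnt V ⊤ = V.ncard := by
      have : V ∩ pointsIn F (3 + 1) ⊤ = V := by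
        apply Set.inter_eq_left.2
        intro P _
        exact (le_top : P.1 ≤ ⊤)
      unfold qhCnt secant
      rw [this]
    rw [e]
    apply mul_right_cancel₀ hq1
    rw [hV1]
    ring
  have hN : ∀ H : Submodule F (Fin (3 + 1) → F), finrank F H = 3 →
      (qhCnt V H : ℤ) = (q : ℤ) ^ 3 + 1 ∨
        (qhCnt V H : ℤ) = (q : ℤ) ^ 3 + (q : ℤ) ^ 2 + 1 := by
    intro H hH
    rcases hV2 H hH with hc | hc
    · left
      apply mul_right_cancel₀ hq1
      unfold qhCnt
      rw [hc]
      norm_num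
    · right
      apply mul_right_cancel₀ hq1
      unfold qhCnt
      rw [hc]
      norm_num
      ring
  have hpos := qh_pos p q hp hpq V hcode hN
  have hgap := qh_gap p q hp hpq hq4 hF V hcode hT hN
  have hno := qh_nolong q hq4 hF V hT hN hgap
  have hline : ∀ l : Submodule F (Fin (3 + 1) → F), finrank F l = 2 →
      qhCnt V l = 1 ∨ qhCnt V l = q + 1 ∨ qhCnt V l = q ^ 2 + 1 := by
    intro l hl
    by_cases hfull : qhCnt V l = q ^ 2 + 1
    · exact Or.inr (Or.inr hfull)
    have hle : qhCnt V l ≤ q ^ 2 + 1 := by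
      rw [← hF, ← qh_line_pts l hl]
      exact qh_cnt_le V l
    obtain ⟨π, hlπ, hπ, hπN⟩ := qh_ex_small q hq4 hF V hT hN l hl (by omega)
    have := qh_small_plane q hF V π hπ hπN (by
      intro x hx hx2
      refine ⟨by exact_mod_cast hpos x hx2, ?_⟩
      rcases hno x hx2 with hc | hc
      · exact hc
      · have := qh_full_big q hq4 hF V hT hN x hx2 hc π hx hπ
        nlinarith) l hlπ hl
    rcases this with hc | hc
    · left; exact_mod_cast hc
    · right; left; exact_mod_cast hc
  exact ⟨hline, fun P hP => qh_pt_main q hq4 hF V hT hN hline P hP⟩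
end

section
/- Let r ≥ 4 and let p > 4 be prime, and let V be a quasi-Hermitian variety of PG(r,p^2) whose characteristic vector v^V belongs to C_p. If π is a plane of PG(r,p^2) not contained in V, then either |π ∩ V| = p^2 + 1 or |π ∩ V| ≥ p^3 + 1. -/
/-!
Common framework: `ProjPoint F n` is the set of points of the projective space
PG(n-1, |F|) (so PG(r, q²) corresponds to `n = r + 1` and `Fintype.card F = q ^ 2`).
Projective subspaces of projective dimension `k` are the submodules of `Fin n → F`
of `finrank` equal to `k + 1`; lines have finrank 2, planes finrank 3 and
hyperplanes finrank `n - 1 = r`.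
-/

open Module Matrix

section QHAbstract
open Configuration Configuration.ProjectivePlane
open scoped Classical

variable {P L : Type} [Membership P L] [Fintype P] [Fintype L]

/-- number of points of `B` on `l` -/
noncomputable def qhS (B : Finset P) (l : L) : ℕ := (B.filter (fun x => x ∈ l)).card

variable [ProjectivePlane P L]

theorem qh_lines_through (x : P) :
    (∑ l : L, if x ∈ l then 1 else 0) = order P L + 1 := by
  rw [← lineCount_eq L x, lineCount, Nat.card_eq_fintype_card, Fintype.card_subtype,
    Finset.card_filter]

theorem qh_lines_pair (x y : P) :
    (∑ l : L, if x ∈ l ∧ y ∈ l then 1 else 0) = if x = y then order P L + 1 else 1 := by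
  split_ifs with h
  · subst h; simpa using qh_lines_through (L := L) x
  · rw [← Finset.card_filter, Finset.card_eq_one]
    obtain ⟨l, hl, hu⟩ := HasLines.existsUnique_line P L x y h
    exact ⟨l, by ext m; simp only [Finset.mem_filter, Finset.mem_univ, true_and,
      Finset.mem_singleton]; exact ⟨fun hm => hu m hm, fun hm => hm ▸ hl⟩⟩

theorem qh_sum (B : Finset P) : ∑ l : L, qhS B l = B.card * (order P L + 1) := by
  simp only [qhS, Finset.card_filter]
  rw [Finset.sum_comm]
  simp only [qh_lines_through, Finset.sum_const, smul_eq_mul]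

theorem qh_sum_sq (B : Finset P) :
    ∑ l : L, qhS B l * qhS B l = B.card * (B.card + order P L) := by
  have h1 : ∀ l : L, qhS B l * qhS B l =
      ∑ x ∈ B, ∑ y ∈ B, if x ∈ l ∧ y ∈ l then 1 else 0 := by
    intro l
    simp only [qhS, Finset.card_filter, Finset.sum_mul_sum]
    refine Finset.sum_congr rfl fun x _ => Finset.sum_congr rfl fun y _ => ?_
    by_cases hx : x ∈ l <;> by_cases hy : y ∈ l <;> simp [hx, hy]
  simp only [h1]
  rw [Finset.sum_comm]
  have h2 : ∀ x ∈ B, (∑ l : L, ∑ y ∈ B, if x ∈ l ∧ y ∈ l then 1 else 0)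
      = B.card + order P L := by
    intro x hx
    rw [Finset.sum_comm]
    simp only [qh_lines_pair]
    have : ∀ y ∈ B, (if x = y then order P L + 1 else 1)
        = (1 + if x = y then order P L else 0) := by
      intro y _; split_ifs <;> omega
    rw [Finset.sum_congr rfl this, Finset.sum_add_distrib]
    simp [hx]
  rw [Finset.sum_congr rfl h2]; simp

theorem qh_sum_through (B : Finset P) (x : P) (hx : x ∉ B) :
    ∑ l : L, (if x ∈ l then qhS B l else 0) = B.card := by
  have h1 : ∀ l : L, (if x ∈ l then qhS B l else 0) =
      ∑ y ∈ B, if x ∈ l ∧ y ∈ l then 1 else 0 := by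
    intro l
    simp only [qhS, Finset.card_filter]
    by_cases h : x ∈ l <;> simp [h]
  simp only [h1]
  rw [Finset.sum_comm]
  simp only [qh_lines_pair]
  rw [Finset.sum_congr rfl (g := fun _ => 1)]
  · simp
  · intro y hy
    rw [if_neg]; rintro rfl; exact hx hy

/-- basic trichotomy -/
theorem qh_abstract (p : ℕ) (hp : 2 < p) (ho : order P L = p ^ 2) (B : Finset P)
    (hs : ∀ l : L, qhS B l % p = 1) (hb : B.card % p = 1) :
    B.card = p ^ 2 + 1 ∨ p ^ 3 + 1 ≤ B.card ∨
      (B.card = p ^ 2 + p + 1 ∧ (∀ l : L, qhS B l = 1 ∨ qhS B l = p + 1) ∧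
        ∀ x ∉ B, ∀ l m : L, x ∈ l → x ∈ m → qhS B l = p + 1 → qhS B m = p + 1 → l = m) := by
  by_cases hlt : p ^ 3 + 1 ≤ B.card
  · exact Or.inr (Or.inl hlt)
  push Not at hlt
  have hs' : ∀ l : L, ∃ k, qhS B l = k * p + 1 := fun l =>
    ⟨qhS B l / p, by have := Nat.div_add_mod (qhS B l) p; rw [hs l] at this; linarith⟩
  have hs1 : ∀ l : L, 1 ≤ qhS B l := fun l => by obtain ⟨k, hk⟩ := hs' l; omega
  -- lower bound
  have hlow : p ^ 2 + 1 ≤ B.card := by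
    by_cases hun : B = Finset.univ
    · rw [hun, Finset.card_univ, card_points P L, ho]; nlinarith
    · obtain ⟨x, hx⟩ : ∃ x, x ∉ B := by
        by_contra h; push Not at h; exact hun (Finset.eq_univ_iff_forall.2 h)
      rw [← qh_sum_through (L := L) B x hx, ← ho, ← qh_lines_through (L := L) x]
      refine Finset.sum_le_sum fun l _ => ?_
      split_ifs
      · exact hs1 l
      · exact le_rfl
  have hterm : ∀ l : L, 0 ≤ ((qhS B l : ℤ) - 1) * ((qhS B l : ℤ) - (p + 1)) := by
    intro l
    obtain ⟨k, hk⟩ := hs' l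
    rw [hk]; push_cast
    have : ((k * p + 1 : ℤ) - 1) * ((k * p + 1 : ℤ) - (p + 1)) = p ^ 2 * (k * (k - 1)) := by ring
    rw [this]
    rcases Nat.eq_zero_or_pos k with rfl | h
    · simp
    · have : (1 : ℤ) ≤ k := by exact_mod_cast h
      have : (0 : ℤ) ≤ k - 1 := by linarith
      positivity
  have hsum : ∑ l : L, ((qhS B l : ℤ) - 1) * ((qhS B l : ℤ) - (p + 1))
      = ((B.card : ℤ) - (p ^ 2 + p + 1)) * ((B.card : ℤ) - (p ^ 3 + 1)) := by
    have e1 : (∑ l : L, (qhS B l : ℤ)) = B.card * (p ^ 2 + 1) := by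
      have := qh_sum (L := L) B; rw [ho] at this; exact_mod_cast this
    have e2 : (∑ l : L, (qhS B l : ℤ) * qhS B l) = B.card * (B.card + p ^ 2) := by
      have := qh_sum_sq (L := L) B; rw [ho] at this; exact_mod_cast this
    have e3 : (Fintype.card L : ℤ) = (p ^ 2) ^ 2 + p ^ 2 + 1 := by
      have := card_lines P L; rw [ho] at this; exact_mod_cast this
    have : ∀ l : L, ((qhS B l : ℤ) - 1) * ((qhS B l : ℤ) - (p + 1))
        = (qhS B l : ℤ) * qhS B l - (p + 2) * qhS B l + (p + 1) := fun l => by ring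
    simp only [this, Finset.sum_add_distrib, Finset.sum_sub_distrib, ← Finset.mul_sum, e1, e2,
      Finset.sum_const, Finset.card_univ, nsmul_eq_mul, e3]
    ring
  have hnn := Finset.sum_nonneg (s := Finset.univ) fun l (_ : l ∈ Finset.univ) => hterm l
  rw [hsum] at hnn
  have hlt' : (B.card : ℤ) - (p ^ 3 + 1) < 0 := by
    have : (B.card : ℤ) < p ^ 3 + 1 := by exact_mod_cast hlt
    linarith
  have hup : (B.card : ℤ) ≤ p ^ 2 + p + 1 := by
    by_contra h
    push Not at h
    have := mul_neg_of_pos_of_neg (sub_pos.2 h) hlt'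
    linarith
  have hup' : B.card ≤ p ^ 2 + p + 1 := by exact_mod_cast hup
  obtain ⟨n, hn⟩ : ∃ n, B.card = n * p + 1 :=
    ⟨B.card / p, by have := Nat.div_add_mod B.card p; rw [hb] at this; linarith⟩
  have hn1 : p ≤ n := by
    have : p * p ≤ n * p := by nlinarith
    exact Nat.le_of_mul_le_mul_right this (by omega)
  have hn2 : n ≤ p + 1 := by
    have : n * p ≤ (p + 1) * p := by nlinarith
    exact Nat.le_of_mul_le_mul_right this (by omega)
  have : n = p ∨ n = p + 1 := by omega
  rcases this with rfl | rfl
  · left; rw [hn]; ring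
  right; right
  have hc : B.card = p ^ 2 + p + 1 := by rw [hn]; ring
  have hc' : (B.card : ℤ) = p ^ 2 + p + 1 := by exact_mod_cast hc
  refine ⟨hc, ?_, ?_⟩
  · intro l
    rw [hc', sub_self, zero_mul] at hsum
    have := (Finset.sum_eq_zero_iff_of_nonneg fun l _ => hterm l).1 hsum l (Finset.mem_univ l)
    rcases mul_eq_zero.1 this with h | h
    · left; have : (qhS B l : ℤ) = 1 := by linarith
      exact_mod_cast this
    · right; have : (qhS B l : ℤ) = p + 1 := by linarith
      exact_mod_cast this
  · intro x hx l m hl hm hsl hsm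
    by_contra hne
    have h1 := qh_sum_through (L := L) B x hx
    have h2 := qh_lines_through (L := L) x
    have h3 : ∑ k : L, ((if x ∈ k then 1 else 0) + ((if k = l then p else 0)
        + (if k = m then p else 0))) ≤ ∑ k : L, (if x ∈ k then qhS B k else 0) := by
      refine Finset.sum_le_sum fun k _ => ?_
      by_cases hk : k = l
      · subst hk; simp [hl, hne, hsl]; omega
      · by_cases hk' : k = m
        · subst hk'; simp [hm, hk, hsm]; omega
        · by_cases hxk : x ∈ k
          · simp [hk, hk', hxk, hs1 k]
          · simp [hk, hk', hxk]
    rw [h1, Finset.sum_add_distrib, Finset.sum_add_distrib, h2, ho, hc] at h3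
    simp at h3
    omega

end QHAbstract

section QHPlanar
open Configuration Configuration.ProjectivePlane Projectivization
open scoped Classical LinearAlgebra.Projectivization

variable {F : Type} [Field F] [Fintype F] [Fintype (ℙ F (Fin 3 → F))]

theorem qh_order : order (ℙ F (Fin 3 → F)) (ℙ F (Fin 3 → F)) = Fintype.card F := by
  have h1 := card_points (ℙ F (Fin 3 → F)) (ℙ F (Fin 3 → F))
  have h2 := Projectivization.card_of_finrank F (Fin 3 → F) (n := 3) (by simp)
  rw [Nat.card_eq_fintype_card, h1] at h2
  simp [Finset.sum_range_succ, Nat.card_eq_fintype_card] at h2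
  set a := order (ℙ F (Fin 3 → F)) (ℙ F (Fin 3 → F))
  set b := Fintype.card F
  rcases lt_trichotomy a b with h | h | h
  · nlinarith
  · exact h
  · nlinarith

theorem qh_dot_rep (v y : Fin 3 → F) (hy : y ≠ 0) :
    v ⬝ᵥ (Projectivization.mk F y hy).rep = 0 ↔ v ⬝ᵥ y = 0 := by
  obtain ⟨a, ha⟩ := Projectivization.exists_smul_eq_mk_rep F y hy
  rw [← ha, dotProduct_smul, smul_eq_zero_iff_eq]

theorem qh_mem_mk (x : ℙ F (Fin 3 → F)) (w : Fin 3 → F) (hw : w ≠ 0) :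
    x ∈ Projectivization.mk F w hw ↔ w ⬝ᵥ x.rep = 0 := by
  rw [dotProduct_comm, ofField.mem_iff]
  conv_lhs => rw [← x.mk_rep]
  exact Projectivization.orthogonal_mk _ _

theorem qh_mem (x l : ℙ F (Fin 3 → F)) : x ∈ l ↔ l.rep ⬝ᵥ x.rep = 0 := by
  conv_lhs => rw [← l.mk_rep]
  exact qh_mem_mk _ _ _

/-- homology with centre `c` and axis `w = 0` (where `w ⬝ c = 1`) -/
noncomputable def qhG (w c : Fin 3 → F) (t : F) : (Fin 3 → F) →ₗ[F] (Fin 3 → F) where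
  toFun x := x + ((t - 1) * (w ⬝ᵥ x)) • c
  map_add' x y := by rw [dotProduct_add, mul_add, add_smul]; abel
  map_smul' a x := by
    rw [dotProduct_smul, RingHom.id_apply, smul_add, smul_smul, smul_eq_mul]; congr 2; ring

theorem qhG_apply (w c : Fin 3 → F) (t : F) (x : Fin 3 → F) :
    qhG w c t x = x + ((t - 1) * (w ⬝ᵥ x)) • c := rfl

theorem qhG_dot (w c : Fin 3 → F) (hwc : w ⬝ᵥ c = 1) (t : F) (x : Fin 3 → F) :
    w ⬝ᵥ qhG w c t x = t * (w ⬝ᵥ x) := by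
  rw [qhG_apply, dotProduct_add, dotProduct_smul, hwc, smul_eq_mul]; ring

theorem qhG_inj (w c : Fin 3 → F) (hwc : w ⬝ᵥ c = 1) (t : Fˣ) :
    Function.Injective (qhG w c (t : F)) := by
  rw [injective_iff_map_eq_zero]
  intro x hx
  have h := qhG_dot w c hwc t x
  rw [hx, dotProduct_zero] at h
  have h0 : w ⬝ᵥ x = 0 := by
    rcases mul_eq_zero.1 h.symm with h | h
    · exact absurd h t.ne_zero
    · exact h
  rw [qhG_apply, h0] at hx
  simpa using hx

theorem qh_pointCount (l : ℙ F (Fin 3 → F)) :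
    (Finset.univ.filter (fun x : ℙ F (Fin 3 → F) => x ∈ l)).card = Fintype.card F + 1 := by
  rw [← qh_order, ← pointCount_eq (ℙ F (Fin 3 → F)) l, pointCount, Nat.card_eq_fintype_card,
    Fintype.card_subtype]

theorem qh_planar (p : ℕ) (hp : p.Prime) (hp4 : 4 < p) (hF : Fintype.card F = p ^ 2)
    (B : Finset (ℙ F (Fin 3 → F)))
    (hB : ∀ S : Finset (ℙ F (Fin 3 → F)),
      (∀ w : Fin 3 → F, ((S.filter (fun x => w ⬝ᵥ x.rep = 0)).card : ZMod p) = 1) →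
      ((S.filter (fun x => x ∈ B)).card : ZMod p) = 1) :
    B.card = p ^ 2 + 1 ∨ p ^ 3 + 1 ≤ B.card := by
  have hmod : ∀ n : ℕ, (n : ZMod p) = 1 ↔ n % p = 1 := by
    intro n
    have := ZMod.natCast_eq_natCast_iff' n 1 p
    rw [Nat.mod_eq_of_lt (by omega : 1 < p)] at this
    simpa using this
  have ho : order (ℙ F (Fin 3 → F)) (ℙ F (Fin 3 → F)) = p ^ 2 := by rw [qh_order, hF]
  have hpt : ∀ l : ℙ F (Fin 3 → F),
      (((Finset.univ.filter (fun x : ℙ F (Fin 3 → F) => x ∈ l)).card : ℕ) : ZMod p) = 1 := by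
    intro l; rw [qh_pointCount, hF]; simp
  have hcardB : (B.card : ZMod p) = 1 := by
    have := hB Finset.univ ?_
    · simpa using this
    · intro w
      by_cases hw : w = 0
      · subst hw
        simp [card_points (ℙ F (Fin 3 → F)) (ℙ F (Fin 3 → F)), ho]
      · simp only [← qh_mem_mk _ w hw]; exact hpt _
  have hlineB : ∀ l : ℙ F (Fin 3 → F), (qhS B l : ZMod p) = 1 := by
    intro l
    have := hB (Finset.univ.filter (fun x => x ∈ l)) ?_
    · rw [qhS, ← this]; congr 2; ext x; simp [and_comm]
    · intro w
      by_cases hw : w = 0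
      · subst hw; simpa using hpt l
      · simp only [← qh_mem_mk _ w hw]
        by_cases hl : l = Projectivization.mk F w hw
        · rw [← hl, Finset.filter_filter]; simpa using hpt l
        · obtain ⟨x, hx, hu⟩ := HasPoints.existsUnique_point (ℙ F (Fin 3 → F))
            (ℙ F (Fin 3 → F)) l _ hl
          have : (Finset.filter (fun x => x ∈ Projectivization.mk F w hw)
            (Finset.univ.filter (fun x => x ∈ l))) = {x} := by
            ext y
            simp only [Finset.mem_filter, Finset.mem_univ, true_and, Finset.mem_singleton]
            exact ⟨fun h => hu y h, fun h => h ▸ hx⟩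
          rw [this]; simp
  have hallB : ∀ w : Fin 3 → F,
      ((B.filter (fun x => w ⬝ᵥ x.rep = 0)).card : ZMod p) = 1 := by
    intro w
    by_cases hw : w = 0
    · subst hw; simpa using hcardB
    · simp only [← qh_mem_mk _ w hw]; exact hlineB _
  rcases qh_abstract p (by omega) ho B (fun l => (hmod _).1 (hlineB l)) ((hmod _).1 hcardB) with
    h | h | ⟨hc, hs, hsec⟩
  · exact Or.inl h
  · exact Or.inr h
  exfalso
  -- a line through two points of `B` is a secant
  have hsec2 : ∀ (l x y : ℙ F (Fin 3 → F)), x ∈ B → y ∈ B → x ≠ y → x ∈ l → y ∈ l →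
      qhS B l = p + 1 := by
    intro l x y hx hy hxy hxl hyl
    rcases hs l with h | h
    · exfalso
      have : 1 < qhS B l := Finset.one_lt_card.2 ⟨x, by simp [hx, hxl], y, by simp [hy, hyl], hxy⟩
      omega
    · exact h
  obtain ⟨x₁, hx₁, x₂, hx₂, hne⟩ := Finset.one_lt_card.1 (show 1 < B.card by nlinarith)
  obtain ⟨l, hl1, hl2⟩ : ∃ l : ℙ F (Fin 3 → F), x₁ ∈ l ∧ x₂ ∈ l :=
    ⟨_, HasLines.mkLine_ax (L := ℙ F (Fin 3 → F)) hne⟩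
  have hl : qhS B l = p + 1 := hsec2 l x₁ x₂ hx₁ hx₂ hne hl1 hl2
  obtain ⟨C, hCB, hCl⟩ : ∃ C ∈ B, C ∉ l := by
    by_contra h
    push Not at h
    have : qhS B l = B.card := by rw [qhS, Finset.filter_true_of_mem h]
    nlinarith
  set c := C.rep with hcdef
  have huc : l.rep ⬝ᵥ c ≠ 0 := fun h => hCl ((qh_mem _ _).2 h)
  set w : Fin 3 → F := (l.rep ⬝ᵥ c)⁻¹ • l.rep with hw
  have hwc : w ⬝ᵥ c = 1 := by rw [hw, smul_dotProduct, smul_eq_mul, inv_mul_cancel₀ huc]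
  have hmeml : ∀ x : ℙ F (Fin 3 → F), x ∈ l ↔ w ⬝ᵥ x.rep = 0 := by
    intro x
    rw [qh_mem, hw, smul_dotProduct, smul_eq_mul, mul_eq_zero]
    simp [huc]
  let G : Fˣ → ℙ F (Fin 3 → F) → ℙ F (Fin 3 → F) := fun t =>
    Projectivization.map (qhG w c (t : F)) (qhG_inj w c hwc t)
  have hGinj : ∀ t, Function.Injective (G t) := fun t => Projectivization.map_injective _ _
  have hne0 : ∀ (t : Fˣ) (x : ℙ F (Fin 3 → F)), qhG w c (t : F) x.rep ≠ 0 := by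
    intro t x h
    exact x.rep_nonzero (qhG_inj w c hwc t (by rw [h, map_zero]))
  have hGmk : ∀ t x, G t x = Projectivization.mk F (qhG w c (t : F) x.rep) (hne0 t x) := by
    intro t x
    conv_lhs => rw [← x.mk_rep]
    rfl
  have hGrep : ∀ (v : Fin 3 → F) t x, v ⬝ᵥ (G t x).rep = 0 ↔
      v ⬝ᵥ (qhG w c (t : F) x.rep) = 0 := by
    intro v t x; rw [hGmk]; exact qh_dot_rep _ _ _
  have hGl : ∀ t, ∀ x ∈ l, G t x = x := by
    intro t x hx
    rw [hGmk]
    conv_rhs => rw [← x.mk_rep]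
    rw [Projectivization.mk_eq_mk_iff']
    exact ⟨1, by rw [qhG_apply, (hmeml x).1 hx]; simp⟩
  have hGC : ∀ t, G t C = C := by
    intro t
    rw [hGmk]
    conv_rhs => rw [← C.mk_rep]
    rw [Projectivization.mk_eq_mk_iff']
    refine ⟨t, ?_⟩
    rw [qhG_apply, ← hcdef, hwc, mul_one, sub_smul, one_smul]; abel
  have hG1 : ∀ x, G 1 x = x := by
    intro x
    rw [hGmk]
    conv_rhs => rw [← x.mk_rep]
    rw [Projectivization.mk_eq_mk_iff']
    exact ⟨1, by rw [qhG_apply]; simp⟩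
  let N : Fˣ → ℕ := fun t => (B.filter (fun x => G t x ∈ B)).card
  have hNmod : ∀ t, N t % p = 1 := by
    intro t
    rw [← hmod]
    have := hB (B.image (G t)) ?_
    · rw [← this, Finset.filter_image, Finset.card_image_of_injective _ (hGinj t)]
    · intro v
      rw [Finset.filter_image, Finset.card_image_of_injective _ (hGinj t),
        ← hallB (v + (((t : F) - 1) * (v ⬝ᵥ c)) • w)]
      congr 2
      ext x
      simp only [Finset.mem_filter, hGrep, qhG_apply, dotProduct_add, dotProduct_smul,
        add_dotProduct, smul_dotProduct, smul_eq_mul]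
      rw [mul_right_comm]
  let A : Finset (ℙ F (Fin 3 → F)) := insert C (B.filter (fun x => x ∈ l))
  have hAcard : A.card = p + 2 := by
    rw [Finset.card_insert_of_notMem (by simp [hCl])]
    have : (B.filter (fun x => x ∈ l)).card = p + 1 := hl
    rw [this]
  have hAB : A ⊆ B := by
    intro x hx
    rcases Finset.mem_insert.1 hx with rfl | hx
    · exact hCB
    · exact (Finset.mem_filter.1 hx).1
  have hNlow : ∀ t, 2 * p + 1 ≤ N t := by
    intro t
    have h1 : p + 2 ≤ N t := by
      rw [← hAcard]
      refine Finset.card_le_card fun x hx => Finset.mem_filter.2 ⟨hAB hx, ?_⟩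
      rcases Finset.mem_insert.1 hx with rfl | hx'
      · rw [hGC]; exact hCB
      · rw [hGl t x (Finset.mem_filter.1 hx').2]; exact hAB hx
    have h2 := Nat.div_add_mod (N t) p
    rw [hNmod t] at h2
    have h3 : 2 ≤ N t / p := by
      by_contra h
      have : N t / p ≤ 1 := by omega
      nlinarith
    nlinarith
  have hN1 : N 1 = B.card := by
    change (B.filter (fun x => G 1 x ∈ B)).card = _
    simp [hG1]
  have hcardU : Fintype.card Fˣ = p ^ 2 - 1 := by
    rw [Fintype.card_units, hF]
  -- upper bound for points off `A`
  have hup : ∀ x ∈ B, x ∉ A → (Finset.univ.filter (fun t : Fˣ => G t x ∈ B)).card ≤ p - 1 := by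
    intro x hx hxA
    have hxC : x ≠ C := fun h => hxA (by simp [A, h])
    have hxl : x ∉ l := fun h => hxA (by simp [A, h, hx])
    obtain ⟨m, hxm, hCm⟩ : ∃ m : ℙ F (Fin 3 → F), x ∈ m ∧ C ∈ m :=
      ⟨_, HasLines.mkLine_ax (L := ℙ F (Fin 3 → F)) hxC⟩
    have hm : qhS B m = p + 1 := hsec2 m x C hx hCB hxC hxm hCm
    have hml : m ≠ l := fun h => hCl (h ▸ hCm)
    obtain ⟨D, hDm, hDl⟩ : ∃ D : ℙ F (Fin 3 → F), D ∈ m ∧ D ∈ l :=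
      ⟨_, HasPoints.mkPoint_ax (P := ℙ F (Fin 3 → F)) hml⟩
    have hDB : D ∈ B := by
      by_contra h
      exact hml (hsec D h m l hDm hDl hm hl)
    have hDC : D ≠ C := fun h => hCl (h ▸ hDl)
    have hwx : w ⬝ᵥ x.rep ≠ 0 := fun h => hxl ((hmeml x).2 h)
    have hcard : (((B.filter (fun y => y ∈ m)).erase C).erase D).card = p - 1 := by
      rw [Finset.card_erase_of_mem (by simp [hDC, hDB, hDm]),
        Finset.card_erase_of_mem (by simp [hCB, hCm])]
      have : (B.filter (fun x => x ∈ m)).card = p + 1 := hm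
      rw [this]; omega
    rw [← hcard]
    refine Finset.card_le_card_of_injOn (fun t => G t x) ?_ ?_
    · intro t ht
      have ht' : G t x ∈ B := by simpa using ht
      have h1 : G t x ≠ D := by
        intro h
        have : G t x ∈ l := h ▸ hDl
        rw [hmeml, hGrep, qhG_dot w c hwc] at this
        rcases mul_eq_zero.1 this with h | h
        · exact t.ne_zero h
        · exact hwx h
      have h2 : G t x ≠ C := by
        intro h
        exact hxC (hGinj t (h.trans (hGC t).symm))
      have h3 : G t x ∈ m := by
        rw [qh_mem, hGrep, qhG_apply, dotProduct_add, dotProduct_smul, (qh_mem _ _).1 hxm,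
          hcdef, (qh_mem _ _).1 hCm]
        simp
      simp [h1, h2, h3, ht']
    · intro s _ t _ hst
      simp only at hst
      rw [hGmk, hGmk, Projectivization.mk_eq_mk_iff'] at hst
      obtain ⟨a, ha⟩ := hst
      have h1 := congrArg (fun z => w ⬝ᵥ z) ha
      simp only [dotProduct_smul, qhG_dot w c hwc, smul_eq_mul] at h1
      have h2 : a * (t : F) = s := by
        have : (a * (t : F) - s) * (w ⬝ᵥ x.rep) = 0 := by linear_combination h1
        rcases mul_eq_zero.1 this with h | h
        · exact sub_eq_zero.1 h
        · exact absurd h hwx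
      have h3 : (a - 1) • (x.rep - (w ⬝ᵥ x.rep) • c) = 0 := by
        rw [qhG_apply, qhG_apply] at ha
        ext i
        have hi := congrFun ha i
        simp only [Pi.smul_apply, Pi.add_apply, Pi.sub_apply, smul_eq_mul, Pi.zero_apply] at hi ⊢
        linear_combination hi - (w ⬝ᵥ x.rep) * c i * h2
      rcases smul_eq_zero.1 h3 with h | h
      · have : a = 1 := sub_eq_zero.1 h
        rw [this, one_mul] at h2
        exact (Units.ext h2).symm
      · exfalso
        apply hxC
        rw [← x.mk_rep, ← C.mk_rep, Projectivization.mk_eq_mk_iff']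
        exact ⟨w ⬝ᵥ x.rep, (sub_eq_zero.1 h).symm⟩
  have hsumN : ∑ t, N t = ∑ x ∈ B, (Finset.univ.filter (fun t : Fˣ => G t x ∈ B)).card := by
    simp only [N, Finset.card_filter]
    rw [Finset.sum_comm]
  have hle : ∑ t, N t ≤ (p + 2) * (p ^ 2 - 1) + (p ^ 2 - 1) * (p - 1) := by
    rw [hsumN, ← Finset.sum_sdiff hAB, add_comm]
    refine add_le_add ?_ ?_
    · rw [← hAcard, ← smul_eq_mul]
      refine Finset.sum_le_card_nsmul _ _ _ fun x _ => ?_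
      rw [← hcardU]; exact Finset.card_le_univ _
    · have : (B \ A).card = p ^ 2 - 1 := by
        rw [Finset.card_sdiff_of_subset hAB, hc, hAcard]; omega
      rw [← this, ← smul_eq_mul]
      refine Finset.sum_le_card_nsmul _ _ _ fun x hx => ?_
      rw [Finset.mem_sdiff] at hx
      exact hup x hx.1 hx.2
  have hlt : ∑ t : Fˣ, (2 * p + 1) < ∑ t, N t := by
    refine Finset.sum_lt_sum (fun t _ => hNlow t) ⟨1, Finset.mem_univ _, ?_⟩
    rw [hN1, hc]; nlinarith
  rw [Finset.sum_const, Finset.card_univ, hcardU, smul_eq_mul] at hlt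
  have : (p + 2) * (p ^ 2 - 1) + (p ^ 2 - 1) * (p - 1) = (p ^ 2 - 1) * (2 * p + 1) := by
    have : 2 * p + 1 = (p + 2) + (p - 1) := by omega
    rw [this]; ring
  omega

end QHPlanar

section QHGlobal
open Projectivization
open scoped Classical LinearAlgebra.Projectivization

/-- points of `PG(n-1,F)` from an injective linear map -/
noncomputable def qhPhi {F : Type} [Field F] {n : ℕ} {E : Type} [AddCommGroup E] [Module F E]
    (f : E →ₗ[F] (Fin n → F)) (hf : Function.Injective f) (x : ℙ F E) : ProjPoint F n :=
  ⟨(Projectivization.map f hf x).submodule, Projectivization.finrank_submodule _⟩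

theorem qhPhi_inj {F : Type} [Field F] {n : ℕ} {E : Type} [AddCommGroup E] [Module F E]
    (f : E →ₗ[F] (Fin n → F)) (hf : Function.Injective f) :
    Function.Injective (qhPhi f hf) := by
  intro x y h
  exact Projectivization.map_injective f hf
    (Projectivization.submodule_injective (congrArg Subtype.val h))

theorem qhPhi_val {F : Type} [Field F] {n : ℕ} {E : Type} [AddCommGroup E] [Module F E]
    (f : E →ₗ[F] (Fin n → F)) (hf : Function.Injective f) (x : ℙ F E) :
    (qhPhi f hf x).1 = Submodule.span F {f x.rep} := by
  conv_lhs => rw [← x.mk_rep]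
  rfl

theorem qhPhi_mem {F : Type} [Field F] {n : ℕ} {E : Type} [AddCommGroup E] [Module F E]
    (f : E →ₗ[F] (Fin n → F)) (hf : Function.Injective f) (x : ℙ F E)
    (W : Submodule F (Fin n → F)) : qhPhi f hf x ∈ pointsIn F n W ↔ f x.rep ∈ W := by
  change (qhPhi f hf x).1 ≤ W ↔ _
  rw [qhPhi_val, Submodule.span_singleton_le_iff_mem]

theorem qhPhi_range {F : Type} [Field F] {n : ℕ} {E : Type} [AddCommGroup E] [Module F E]
    (f : E →ₗ[F] (Fin n → F)) (hf : Function.Injective f) :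
    Set.range (qhPhi f hf) = pointsIn F n (LinearMap.range f) := by
  ext Q
  constructor
  · rintro ⟨x, rfl⟩
    rw [qhPhi_mem]
    exact ⟨_, rfl⟩
  · intro hQ
    have h1 : (Projectivization.mk'' Q.1 Q.2).submodule = Q.1 := Projectivization.submodule_mk'' _ _
    rw [Projectivization.submodule_eq] at h1
    set v := (Projectivization.mk'' Q.1 Q.2).rep with hv
    have hv0 : v ≠ 0 := Projectivization.rep_nonzero _
    have hQ' : Q.1 ≤ LinearMap.range f := hQ
    rw [← h1, Submodule.span_singleton_le_iff_mem] at hQ'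
    obtain ⟨y, hy⟩ := hQ'
    have hy0 : y ≠ 0 := by rintro rfl; exact hv0 (by rw [← hy, map_zero])
    refine ⟨Projectivization.mk F y hy0, Subtype.ext ?_⟩
    rw [← h1, ← hy]
    rfl

theorem qh_points_mod {F : Type} [Field F] [Fintype F] {p n : ℕ}
    (hF : Fintype.card F = p ^ 2) (W : Submodule F (Fin n → F)) (hW : 1 ≤ finrank F W) :
    ((pointsIn F n W).ncard : ZMod p) = 1 := by
  have h := qhPhi_range W.subtype W.injective_subtype
  rw [Submodule.range_subtype] at h
  rw [← h, ← Set.image_univ, Set.ncard_image_of_injective _ (qhPhi_inj _ _), Set.ncard_univ,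
    Projectivization.card_of_finrank F W rfl, Nat.card_eq_fintype_card, hF]
  obtain ⟨k, hk⟩ := Nat.exists_eq_add_of_le' hW
  rw [hk, Finset.sum_range_succ']
  simp

theorem qh_global {F : Type} [Field F] [Fintype F] {p n : ℕ} [Fintype (ProjPoint F n)]
    (hn : 2 ≤ n) (hF : Fintype.card F = p ^ 2) (S : Finset (ProjPoint F n))
    (hS : ∀ H : Submodule F (Fin n → F), finrank F H = n - 1 →
      ((S.filter (fun x => x ∈ pointsIn F n H)).card : ZMod p) = 1)
    (v : ProjPoint F n → ZMod p) (hv : v ∈ hypCode F p n) :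
    ∑ x ∈ S, v x = ∑ x, v x := by
  unfold hypCode at hv
  induction hv using Submodule.span_induction with
  | mem v hv =>
    obtain ⟨H, hH, rfl⟩ := hv
    have h1 := hS H hH
    have h2 := qh_points_mod hF H (by omega)
    rw [Set.ncard_eq_toFinset_card'] at h2
    simp only [charVec, Set.indicator_apply, Pi.one_apply]
    rw [Finset.sum_boole, Finset.sum_boole, h1, ← h2]
    congr 2
    ext x; simp
  | zero => simp
  | add x y _ _ hx hy => simp only [Pi.add_apply, Finset.sum_add_distrib, hx, hy]
  | smul a x _ hx => simp only [Pi.smul_apply, ← Finset.smul_sum, hx]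

end QHGlobal

/-- in PG(r, p²) with `r ≥ 4` and `p > 4` prime, a plane not contained
in `V` meets `V` in `p² + 1` points or in at least `p³ + 1` points. -/
theorem stmt13 (p r : ℕ) (hp : p.Prime) (hp4 : 4 < p) (hr : 4 ≤ r)
    (F : Type) [Field F] [Fintype F] (hF : Fintype.card F = p ^ 2)
    (V : Set (ProjPoint F (r + 1))) (hV : IsQuasiHermitian F p r V)
    (hcode : charVec F p (r + 1) V ∈ hypCode F p (r + 1))
    (π : Submodule F (Fin (r + 1) → F)) (hπ : finrank F π = 3)
    (hnot : ¬ pointsIn F (r + 1) π ⊆ V) :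
    secant F (r + 1) V π = p ^ 2 + 1 ∨ p ^ 3 + 1 ≤ secant F (r + 1) V π := by
  classical
  haveI : Finite (ProjPoint F (r + 1)) :=
    Finite.of_injective (fun P : ProjPoint F (r + 1) => P.1) Subtype.val_injective
  haveI : Fintype (ProjPoint F (r + 1)) := Fintype.ofFinite _
  haveI : Fintype (Projectivization F (Fin 3 → F)) := Fintype.ofFinite _
  have hVcard : (V.ncard : ZMod p) = 1 := by
    have h := congrArg (Int.cast : ℤ → ZMod p) hV.1
    push_cast at h
    rw [CharP.cast_eq_zero (ZMod p) p, zero_pow (by omega), zero_pow (by omega),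
      zero_pow (by omega)] at h
    have h2 : ((-1 : ZMod p) ^ r) * (-1) ^ r = 1 := by
      rw [← mul_pow]; simp
    linear_combination (-1) * h + h2
  obtain ⟨e⟩ : Nonempty ((Fin 3 → F) ≃ₗ[F] π) :=
    FiniteDimensional.nonempty_linearEquiv_of_finrank_eq (by simp [hπ])
  let f : (Fin 3 → F) →ₗ[F] (Fin (r + 1) → F) := π.subtype ∘ₗ e.toLinearMap
  have hf : Function.Injective f := π.injective_subtype.comp e.injective
  have hrange : LinearMap.range f = π := by
    rw [LinearMap.range_comp, LinearEquiv.range, Submodule.map_top, Submodule.range_subtype]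
  let B : Finset (Projectivization F (Fin 3 → F)) :=
    Finset.univ.filter (fun x => qhPhi f hf x ∈ V)
  have hBcard : secant F (r + 1) V π = B.card := by
    unfold secant
    rw [← hrange, ← qhPhi_range f hf, ← Set.image_preimage_eq_inter_range,
      Set.ncard_image_of_injective _ (qhPhi_inj f hf), Set.ncard_eq_toFinset_card']
    congr 1
    ext x; simp [B]
  rw [hBcard]
  refine qh_planar p hp hp4 hF B ?_
  intro S hS
  have key := qh_global (p := p) (by omega) hF (S.image (qhPhi f hf)) ?_ _ hcode
  · simp only [charVec, Set.indicator_apply, Pi.one_apply] at key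
    rw [Finset.sum_boole, Finset.sum_boole, Finset.filter_image,
      Finset.card_image_of_injective _ (qhPhi_inj f hf)] at key
    rw [Set.ncard_eq_toFinset_card'] at hVcard
    rw [← hVcard]
    convert key using 3
    · ext x; simp [B]
    · ext x; simp
  · intro H hH
    rw [Finset.filter_image, Finset.card_image_of_injective _ (qhPhi_inj f hf)]
    simp only [qhPhi_mem]
    have hlt : H < ⊤ := by
      rw [lt_top_iff_ne_top]
      rintro rfl
      rw [finrank_top] at hH
      simp at hH
    obtain ⟨g, hg0, hg⟩ := Submodule.exists_le_ker_of_lt_top H hlt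
    have hker : H = LinearMap.ker g := by
      refine Submodule.eq_of_le_of_finrank_le hg ?_
      have h1 := LinearMap.finrank_range_add_finrank_ker g
      have h2 : 0 < finrank F (LinearMap.range g) := by
        rw [Module.finrank_pos_iff, Submodule.nontrivial_iff_ne_bot]
        exact fun h => hg0 (LinearMap.range_eq_bot.1 h)
      simp at h1
      omega
    have hw : ∀ y : Fin 3 → F, f y ∈ H ↔ (fun i => g (f (Pi.single i 1))) ⬝ᵥ y = 0 := by
      intro y
      rw [hker, LinearMap.mem_ker]
      have : g (f y) = (fun i => g (f (Pi.single i 1))) ⬝ᵥ y := by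
        have := LinearMap.pi_apply_eq_sum_univ (g ∘ₗ f) y
        rw [LinearMap.comp_apply] at this
        rw [this, dotProduct]
        refine Finset.sum_congr rfl fun i _ => ?_
        rw [smul_eq_mul, mul_comm, LinearMap.comp_apply]
        congr 3
        ext j
        simp [Pi.single_apply, eq_comm]
      rw [this]
    simp only [hw]
    exact hS _
end
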